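/- arXiv:1606.08818 — 3 statements merged into one kernel-verified Lean document; each statement's English description precedes it below -/
import Mathlib

section
/- For p > 0 write I_n^p := diag(p, 1, …, 1) ∈ Sym(ℝ^{n+1}). For every A ∈ Sym(ℝ^{n+1}) \ S, Θ̃(A) = lim_{p→∞} Σ_j arctan( λ_j(I_n^p A I_n^p) ), where λ_1(·), …, λ_{n+1}(·) denote the eigenvalues (with multiplicity) of the real symmetric matrix I_n^p A I_n^p. -/
open Real Filter Matrix

noncomputable section

/-- The Hessian matrix of a function `v : ℝ^m → ℝ` at `x`. -/
def hessianMatrix {m : ℕ} (v : (Fin m → ℝ) → ℝ) (x : Fin m → ℝ) :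
    Matrix (Fin m) (Fin m) ℝ :=
  Matrix.of fun i j => iteratedFDeriv ℝ 2 v x ![Pi.single i 1, Pi.single j 1]

/-- The lifted Lagrangian angle θ̃(A) = ∑ arctan λ_j(A) of a real symmetric matrix. -/
def liftedAngle {m : ℕ} (A : Matrix (Fin m) (Fin m) ℝ) : ℝ :=
  if h : A.IsHermitian then ∑ j, Real.arctan (h.eigenvalues j) else 0

/-- The Harvey–Lawson branches `F_c` of the special Lagrangian subequation. -/
def Fc (m : ℕ) (c : ℝ) : Set (Matrix (Fin m) (Fin m) ℝ) :=
  {A | A.IsSymm ∧ c ≤ liftedAngle A}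

/-- `I_n = diag(0,1,…,1)` as a complex `(n+1)×(n+1)` matrix. -/
def Inmat (n : ℕ) : Matrix (Fin (n+1)) (Fin (n+1)) ℂ :=
  Matrix.diagonal fun i => if i = 0 then 0 else 1

/-- The complex matrix `I_n + i A`. -/
def cmat {n : ℕ} (A : Matrix (Fin (n+1)) (Fin (n+1)) ℝ) :
    Matrix (Fin (n+1)) (Fin (n+1)) ℂ :=
  Inmat n + Complex.I • A.map (fun a => (a : ℂ))

open Classical in
/-- The lifted space-time Lagrangian angle Θ̃, summing `Complex.arg` (with values in
`(-π, π]`) over the roots (with multiplicity) of the characteristic polynomial of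
`I_n + i A`, shifted by `π/2` over the singular set `S = {det (I_n + iA) = 0}` where only
the nonzero roots are counted. -/
def spaceTimeAngle {n : ℕ} (A : Matrix (Fin (n+1)) (Fin (n+1)) ℝ) : ℝ :=
  if (cmat A).det = 0 then
    π / 2 + ((((cmat A).charpoly.roots).filter (fun z => z ≠ 0)).map Complex.arg).sum
  else (((cmat A).charpoly.roots).map Complex.arg).sum

/-- The degenerate special Lagrangian subequation `ℱ_c ⊂ Sym(ℝ^{n+1})`. -/
def calF (n : ℕ) (c : ℝ) : Set (Matrix (Fin (n+1)) (Fin (n+1)) ℝ) :=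
  {A | A.IsSymm ∧ c ≤ spaceTimeAngle A}

/-- Interior of a set of symmetric matrices, relative to the symmetric matrices. -/
def symInterior {m : ℕ} (F : Set (Matrix (Fin m) (Fin m) ℝ)) :
    Set (Matrix (Fin m) (Fin m) ℝ) :=
  {A | A.IsSymm ∧ ∀ᶠ B in nhds A, B.IsSymm → B ∈ F}

/-- The dual subequation `F̃ = (−Int F)ᶜ` (within the symmetric matrices). -/
def dualSub {m : ℕ} (F : Set (Matrix (Fin m) (Fin m) ℝ)) :
    Set (Matrix (Fin m) (Fin m) ℝ) :=
  {A | A.IsSymm ∧ -A ∉ symInterior F}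

/-- An `EReal`-valued (i.e. `[−∞,∞)`-valued) function is subaffine on `U` if, for every
affine function `a` and compact `K ⊆ U`, `u ≤ a` on `∂K` implies `u ≤ a` on `K`. -/
def IsSubaffine {m : ℕ} (U : Set (Fin m → ℝ)) (u : (Fin m → ℝ) → EReal) : Prop :=
  ∀ (a : (Fin m → ℝ) →ᵃ[ℝ] ℝ) (K : Set (Fin m → ℝ)), IsCompact K → K ⊆ U →
    (∀ x ∈ frontier K, u x ≤ (a x : EReal)) → ∀ x ∈ K, u x ≤ (a x : EReal)

/-- `u` is of type `F` on `U` (i.e. `u ∈ F(U)`): `u` is `[−∞,∞)`-valued, upper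
semicontinuous on `U`, and `u + v` is subaffine on `U` for every `C²` function `v`
whose Hessian lies in the dual subequation `F̃` at every point of `U`. -/
def IsTypeF {m : ℕ} (F : Set (Matrix (Fin m) (Fin m) ℝ)) (U : Set (Fin m → ℝ))
    (u : (Fin m → ℝ) → EReal) : Prop :=
  (∀ x ∈ U, u x ≠ ⊤) ∧ UpperSemicontinuousOn u U ∧
    ∀ v : (Fin m → ℝ) → ℝ, ContDiffOn ℝ 2 v U →
      (∀ x ∈ U, hessianMatrix v x ∈ dualSub F) →
      IsSubaffine U (fun x => u x + ((v x : ℝ) : EReal))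

/-- The lower-right `n×n` block `A⁺` of an `(n+1)×(n+1)` matrix. -/
def Aplus {n : ℕ} (A : Matrix (Fin (n+1)) (Fin (n+1)) ℝ) : Matrix (Fin n) (Fin n) ℝ :=
  Matrix.of fun i j => A i.succ j.succ

end

/-- `I_n^p = diag(p, 1, …, 1)`. -/
def Inp (n : ℕ) (p : ℝ) : Matrix (Fin (n+1)) (Fin (n+1)) ℝ :=
  Matrix.diagonal fun i => if i = 0 then p else 1

/-! The sum of the arguments of the eigenvalues of `M` is a real lift of the argument of `det M`.
On matrices whose spectrum lies in the slit plane this lift is continuous: the segment from `1` to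
`M` stays in this set, so continuity propagates along it by uniqueness of lifts through the covering
`ℝ → Real.Angle`. An invertible matrix with positive semidefinite Hermitian part has such a
spectrum, and so does its congruence `E M E` by a positive definite `E`. The argument of
`det (E M E)` does not depend on `E`, so by connectedness neither does its lift.

Writing `P` for `I_n^p`, one has `1 + i P A P = P (P⁻² + i A) P`, and the left-hand side has
argument sum `∑ arctan λ_j(P A P)`. So the lifted angle of `P A P` is the argument sum of
`P⁻² + i A`, which tends to `I_n + i A` as `p → ∞`. -/

section

open scoped ComplexOrder Topology unitInterval

variable {m : Type*}

theorem convex_setOf_posDef {𝕜 : Type*} [RCLike 𝕜] :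
    Convex ℝ {E : Matrix m m 𝕜 | E.PosDef} := by
  intro E hE F hF a b ha hb hab
  rcases ha.eq_or_lt with rfl | ha
  · simpa [show b = 1 by linarith] using hF
  · exact (hE.smul ha).add_posSemidef (hF.posSemidef.smul hb)

/-- A matrix is accretive when its Hermitian part is positive semidefinite, which confines its
spectrum to the closed right half-plane. The factor `1/2` of the Hermitian part is left out. -/
def IsAccretive (M : Matrix m m ℂ) : Prop :=
  (M + Mᴴ).PosSemidef

theorem isAccretive_add_I_smul {D A : Matrix m m ℂ} (hD : D.PosSemidef) (hA : A.IsHermitian) :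
    IsAccretive (D + Complex.I • A) := by
  have hsum : D + Complex.I • A + (D + Complex.I • A)ᴴ = D + D := by
    rw [Matrix.conjTranspose_add, Matrix.conjTranspose_smul, hD.1.eq, hA.eq,
      Complex.star_def, Complex.conj_I]
    module
  rw [IsAccretive, hsum]
  exact hD.add hD

variable [Fintype m]

theorem IsAccretive.conjTranspose_mul_mul_same {k : Type*} [Finite k] {M : Matrix m m ℂ}
    (hM : IsAccretive M) (B : Matrix m k ℂ) : IsAccretive (Bᴴ * M * B) := by
  simpa only [IsAccretive, Matrix.conjTranspose_mul, Matrix.conjTranspose_conjTranspose,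
    ← Matrix.mul_assoc, ← Matrix.mul_add, ← Matrix.add_mul]
    using Matrix.PosSemidef.conjTranspose_mul_mul_same hM B

variable [DecidableEq m]

theorem det_smul_one_add_smul_of_splits {K : Type*} [Field K] {M : Matrix m m K}
    (hM : M.charpoly.Splits) (a b : K) :
    (a • (1 : Matrix m m K) + b • M).det = (M.charpoly.roots.map fun z => a + b * z).prod := by
  have hcard : M.charpoly.roots.card = Fintype.card m := by
    rw [← hM.natDegree_eq_card_roots, M.charpoly_natDegree_eq_dim]
  rcases eq_or_ne b 0 with rfl | hb
  · simp [hcard]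
  · have hfactor : a • (1 : Matrix m m K) + b • M = (-b) • (Matrix.scalar m (-a / b) - M) := by
      rw [Matrix.scalar_apply, ← Matrix.smul_one_eq_diagonal, smul_sub, smul_smul, neg_smul,
        sub_neg_eq_add, show -b * (-a / b) = a by field_simp]
    rw [hfactor, Matrix.det_smul, ← Matrix.eval_charpoly,
      hM.eval_eq_prod_roots_of_monic M.charpoly_monic, ← hcard, ← Multiset.prod_replicate,
      ← Multiset.map_const', ← Multiset.prod_map_mul]
    refine congrArg _ (Multiset.map_congr rfl fun z _ => ?_)
    field_simp
    ring

theorem roots_charpoly_smul_one_add_smul {K : Type*} [Field K] [Infinite K] {M : Matrix m m K}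
    (hM : M.charpoly.Splits) (a b : K) :
    (a • (1 : Matrix m m K) + b • M).charpoly.roots =
      M.charpoly.roots.map fun z => a + b * z := by
  have hcharpoly : (a • (1 : Matrix m m K) + b • M).charpoly =
      ((M.charpoly.roots.map fun z => a + b * z).map
        fun z => Polynomial.X - Polynomial.C z).prod := by
    refine Polynomial.funext fun t => ?_
    have hshift : Matrix.scalar m t - (a • (1 : Matrix m m K) + b • M) =
        (t - a) • (1 : Matrix m m K) + (-b) • M := by
      rw [Matrix.scalar_apply, ← Matrix.smul_one_eq_diagonal]
      module
    rw [Matrix.eval_charpoly, hshift, det_smul_one_add_smul_of_splits hM,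
      Polynomial.eval_multiset_prod, Multiset.map_map, Multiset.map_map]
    refine congrArg _ (Multiset.map_congr rfl fun z _ => ?_)
    simp only [Function.comp_apply, Polynomial.eval_sub, Polynomial.eval_X, Polynomial.eval_C]
    ring
  rw [hcharpoly, Polynomial.roots_multiset_prod_X_sub_C]

/-- The sum of the principal arguments of the eigenvalues of `M`, with multiplicity. For
invertible `M` it is a real lift of the argument of `det M`, which lives in `Real.Angle`. -/
noncomputable def argSum (M : Matrix m m ℂ) : ℝ :=
  (M.charpoly.roots.map Complex.arg).sum

theorem argSum_smul_one_add_smul (a b : ℂ) (M : Matrix m m ℂ) :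
    argSum (a • (1 : Matrix m m ℂ) + b • M) =
      (M.charpoly.roots.map fun z => (a + b * z).arg).sum := by
  rw [argSum, roots_charpoly_smul_one_add_smul (IsAlgClosed.splits _), Multiset.map_map]
  rfl

theorem coe_sum_map_arg {s : Multiset ℂ} (hs : (0 : ℂ) ∉ s) :
    (((s.map Complex.arg).sum : ℝ) : Real.Angle) = (s.prod.arg : Real.Angle) := by
  induction s using Multiset.induction_on with
  | empty => simp
  | cons z s ih =>
    rw [Multiset.mem_cons, not_or] at hs
    rw [Multiset.map_cons, Multiset.sum_cons, Multiset.prod_cons, Real.Angle.coe_add, ih hs.2,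
      Complex.arg_mul_coe_angle (Ne.symm hs.1) (Multiset.prod_ne_zero hs.2)]

theorem coe_argSum {M : Matrix m m ℂ} (hM : M.det ≠ 0) :
    (argSum M : Real.Angle) = (M.det.arg : Real.Angle) := by
  rw [M.det_eq_prod_roots_charpoly] at hM ⊢
  exact coe_sum_map_arg fun h => hM (Multiset.prod_eq_zero h)

theorem isCoveringMap_coe_angle : IsCoveringMap ((↑) : ℝ → Real.Angle) :=
  AddCircle.isCoveringMap_coe (2 * π)

theorem continuous_of_continuous_coe_angle {X : Type*} [TopologicalSpace X] {g : I × X → ℝ}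
    (hg : Continuous fun x => (g x : Real.Angle)) (hstart : Continuous fun x => g (0, x))
    (hpath : ∀ x, Continuous fun s => g (s, x)) : Continuous g :=
  isCoveringMap_coe_angle.isLocalHomeomorph.continuous_lift
    isCoveringMap_coe_angle.isSeparatedMap ⟨_, hg⟩ rfl hstart hpath

theorem mem_roots_charpoly_iff_mem_spectrum {K : Type*} [Field K] {M : Matrix m m K} {z : K} :
    z ∈ M.charpoly.roots ↔ z ∈ spectrum K M := by
  rw [Matrix.mem_spectrum_iff_isRoot_charpoly, Polynomial.mem_roots M.charpoly_monic.ne_zero]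

theorem zero_notMem_spectrum_iff_det_ne_zero {K : Type*} [Field K] {M : Matrix m m K} :
    (0 : K) ∉ spectrum K M ↔ M.det ≠ 0 := by
  rw [spectrum.zero_notMem_iff, Matrix.isUnit_iff_isUnit_det, isUnit_iff_ne_zero]

theorem det_ne_zero_of_spectrum_subset_slitPlane {M : Matrix m m ℂ}
    (hM : spectrum ℂ M ⊆ Complex.slitPlane) : M.det ≠ 0 :=
  zero_notMem_spectrum_iff_det_ne_zero.1 fun h => Complex.zero_notMem_slitPlane (hM h)

theorem one_sub_add_mul_mem_slitPlane {z : ℂ} (hz : z ∈ Complex.slitPlane) (s : I) :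
    1 - (s : ℂ) + s * z ∈ Complex.slitPlane := by
  simpa using Complex.starConvex_one_slitPlane hz (sub_nonneg.2 s.2.2) s.2.1 (by ring)

theorem spectrum_lineMap_one_subset_slitPlane {M : Matrix m m ℂ}
    (hM : spectrum ℂ M ⊆ Complex.slitPlane) (s : I) :
    spectrum ℂ (AffineMap.lineMap (1 : Matrix m m ℂ) M (s : ℂ)) ⊆ Complex.slitPlane := by
  intro w hw
  rw [← mem_roots_charpoly_iff_mem_spectrum, AffineMap.lineMap_apply_module,
    roots_charpoly_smul_one_add_smul (IsAlgClosed.splits _), Multiset.mem_map] at hw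
  obtain ⟨z, hz, rfl⟩ := hw
  exact one_sub_add_mul_mem_slitPlane (hM (mem_roots_charpoly_iff_mem_spectrum.1 hz)) s

theorem continuous_argSum_lineMap_one {M : Matrix m m ℂ}
    (hM : spectrum ℂ M ⊆ Complex.slitPlane) :
    Continuous fun s : I => argSum (AffineMap.lineMap (1 : Matrix m m ℂ) M (s : ℂ)) := by
  simp only [AffineMap.lineMap_apply_module, argSum_smul_one_add_smul]
  refine continuous_multiset_sum _ fun z hz => continuous_iff_continuousAt.2 fun s => ?_
  have hslit := one_sub_add_mul_mem_slitPlane (hM (mem_roots_charpoly_iff_mem_spectrum.1 hz)) s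
  exact ContinuousAt.comp' (Complex.continuousAt_arg hslit) (by fun_prop)

theorem continuous_coe_argSum {X : Type*} [TopologicalSpace X] {f : X → Matrix m m ℂ}
    (hf : Continuous f) (hdet : ∀ x, (f x).det ≠ 0) :
    Continuous fun x => (argSum (f x) : Real.Angle) := by
  simp only [coe_argSum (hdet _)]
  exact continuous_iff_continuousAt.2 fun x =>
    (Complex.continuousAt_arg_coe_angle (hdet x)).comp
      (f := fun x => (f x).det) hf.matrix_det.continuousAt

theorem continuous_argSum_comp {X : Type*} [TopologicalSpace X] {f : X → Matrix m m ℂ}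
    (hf : Continuous f) (hspec : ∀ x, spectrum ℂ (f x) ⊆ Complex.slitPlane) :
    Continuous fun x => argSum (f x) := by
  have hcont : Continuous fun y : I × X => AffineMap.lineMap (k := ℂ) 1 (f y.2) (y.1 : ℂ) := by
    simp only [AffineMap.lineMap_apply_module]
    fun_prop
  have hdet (y : I × X) : (AffineMap.lineMap (k := ℂ) 1 (f y.2) (y.1 : ℂ)).det ≠ 0 :=
    det_ne_zero_of_spectrum_subset_slitPlane <|
      spectrum_lineMap_one_subset_slitPlane (hspec y.2) y.1
  have hstart : Continuous fun x =>
      argSum (AffineMap.lineMap (k := ℂ) 1 (f x) (((0 : I) : ℝ) : ℂ)) := by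
    simpa only [Set.Icc.coe_zero, Complex.ofReal_zero, AffineMap.lineMap_apply_zero]
      using continuous_const
  have hpath (x : X) := continuous_argSum_lineMap_one (hspec x)
  have hlift := continuous_of_continuous_coe_angle (continuous_coe_argSum hcont hdet) hstart hpath
  simpa only [Function.comp_def, Set.Icc.coe_one, Complex.ofReal_one, AffineMap.lineMap_apply_one]
    using hlift.comp (Continuous.prodMk_right (1 : I))

theorem continuousOn_argSum :
    ContinuousOn argSum {M : Matrix m m ℂ | spectrum ℂ M ⊆ Complex.slitPlane} :=
  continuousOn_iff_continuous_domRestrict.2 <|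
    continuous_argSum_comp continuous_subtype_val Subtype.property

theorem exists_mulVec_eq_smul_of_mem_spectrum {K : Type*} [Field K] {M : Matrix m m K} {z : K}
    (hz : z ∈ spectrum K M) : ∃ v, v ≠ 0 ∧ M *ᵥ v = z • v := by
  rw [← Matrix.spectrum_toLin', ← Module.End.hasEigenvalue_iff_mem_spectrum] at hz
  obtain ⟨v, hv⟩ := hz.exists_hasEigenvector
  exact ⟨v, hv.2, by simpa using hv.apply_eq_smul⟩

namespace IsAccretive

theorem re_nonneg_of_mem_spectrum {M : Matrix m m ℂ} (hM : IsAccretive M) {z : ℂ}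
    (hz : z ∈ spectrum ℂ M) : 0 ≤ z.re := by
  obtain ⟨v, hv, hMv⟩ := exists_mulVec_eq_smul_of_mem_spectrum hz
  have hpos : 0 < star v ⬝ᵥ v := Matrix.dotProduct_star_self_pos_iff.2 hv
  have hform : star v ⬝ᵥ (M + Mᴴ) *ᵥ v = (2 * z.re : ℝ) * (star v ⬝ᵥ v) := by
    rw [Matrix.add_mulVec, dotProduct_add, Matrix.dotProduct_mulVec _ Mᴴ, ← Matrix.star_mulVec,
      hMv, star_smul, dotProduct_smul, smul_dotProduct, smul_eq_mul, smul_eq_mul, ← add_mul]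
    congr 1
    exact Complex.add_conj z
  have hnonneg : (0 : ℂ) ≤ (2 * z.re : ℝ) := by
    refine le_of_mul_le_mul_of_pos_right ?_ hpos
    simpa only [zero_mul, hform] using Matrix.PosSemidef.dotProduct_mulVec_nonneg hM v
  linarith [Complex.zero_le_real.1 hnonneg]

theorem spectrum_subset_slitPlane {M : Matrix m m ℂ} (hM : IsAccretive M) (hdet : M.det ≠ 0) :
    spectrum ℂ M ⊆ Complex.slitPlane := by
  intro z hz
  have hz0 : z ≠ 0 := fun h => zero_notMem_spectrum_iff_det_ne_zero.2 hdet (h ▸ hz)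
  have harg := Complex.abs_arg_le_pi_div_two_iff.2 (hM.re_nonneg_of_mem_spectrum hz)
  exact Complex.mem_slitPlane_iff_arg.2
    ⟨(by linarith [le_of_abs_le harg, Real.pi_pos] : z.arg < π).ne, hz0⟩

theorem continuousOn_argSum :
    ContinuousOn argSum {M : Matrix m m ℂ | IsAccretive M ∧ M.det ≠ 0} :=
  _root_.continuousOn_argSum.mono fun _ hM => hM.1.spectrum_subset_slitPlane hM.2

end IsAccretive

theorem coe_argSum_mul_mul {E M : Matrix m m ℂ} (hE : E.PosDef) (hM : M.det ≠ 0) :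
    (argSum (E * M * E) : Real.Angle) = (argSum M : Real.Angle) := by
  obtain ⟨r, hr, hrE⟩ : ∃ r : ℝ, 0 < r ∧ (r : ℂ) = E.det * E.det :=
    RCLike.pos_iff_exists_ofReal.1 (mul_pos hE.det_pos hE.det_pos)
  have hdet : (E * M * E).det = r * M.det := by
    rw [Matrix.det_mul, Matrix.det_mul, hrE]
    ring
  have hr0 : (r : ℂ) ≠ 0 := Complex.ofReal_ne_zero.2 hr.ne'
  rw [coe_argSum hM, coe_argSum (hdet ▸ mul_ne_zero hr0 hM), hdet, Complex.arg_real_mul _ hr]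

theorem argSum_mul_mul_of_posDef {E M : Matrix m m ℂ} (hE : E.PosDef) (hM : IsAccretive M)
    (hdet : M.det ≠ 0) : argSum (E * M * E) = argSum M := by
  have hmaps : Set.MapsTo (fun F => F * M * F) {F : Matrix m m ℂ | F.PosDef}
      {N | IsAccretive N ∧ N.det ≠ 0} := by
    intro F hF
    refine ⟨by simpa only [hF.1.eq] using hM.conjTranspose_mul_mul_same F, ?_⟩
    rw [Matrix.det_mul, Matrix.det_mul]
    exact mul_ne_zero (mul_ne_zero hF.det_pos.ne' hdet) hF.det_pos.ne'
  have hcont : ContinuousOn (fun F => argSum (F * M * F)) {F : Matrix m m ℂ | F.PosDef} :=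
    IsAccretive.continuousOn_argSum.comp (by fun_prop) hmaps
  simpa only [one_mul, mul_one] using
    isCoveringMap_coe_angle.constOn_of_comp convex_setOf_posDef.isPreconnected hcont
      (fun F hF G hG => (coe_argSum_mul_mul hF hdet).trans (coe_argSum_mul_mul hG hdet).symm)
      hE Matrix.PosDef.one

theorem arctan_eq_arg_one_add_I_mul (x : ℝ) : Real.arctan x = (1 + Complex.I * x : ℂ).arg := by
  rw [Complex.arg_of_re_nonneg (by simp), Real.arctan_eq_arcsin, Complex.norm_eq_sqrt_sq_add_sq]
  simp

theorem liftedAngle_eq_argSum {k : ℕ} {B : Matrix (Fin k) (Fin k) ℝ} (hB : B.IsHermitian) :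
    liftedAngle B = argSum (1 + Complex.I • B.map (fun x => (x : ℂ))) := by
  have hroots : (B.map (fun x => (x : ℂ))).charpoly.roots =
      Finset.univ.val.map fun j => (hB.eigenvalues j : ℂ) := by
    rw [show (B.map fun x => (x : ℂ)).charpoly = B.charpoly.map Complex.ofRealHom from
      B.charpoly_map Complex.ofRealHom, hB.splits_charpoly.roots_map,
      hB.roots_charpoly_eq_eigenvalues, Multiset.map_map]
    rfl
  rw [liftedAngle, dif_pos hB, ← one_smul ℂ (1 : Matrix (Fin k) (Fin k) ℂ),
    argSum_smul_one_add_smul, hroots, Multiset.map_map]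
  simp [arctan_eq_arg_one_add_I_mul, Finset.sum]

variable {n : ℕ}

theorem map_ofReal_inp (p : ℝ) :
    (Inp n p).map (fun x => (x : ℂ)) = Matrix.diagonal fun i => if i = 0 then (p : ℂ) else 1 := by
  rw [Inp, Matrix.diagonal_map Complex.ofReal_zero]
  simp only [apply_ite, Complex.ofReal_one]

theorem posDef_map_ofReal_inp {p : ℝ} (hp : 0 < p) :
    ((Inp n p).map (fun x => (x : ℂ))).PosDef := by
  rw [map_ofReal_inp, Matrix.posDef_diagonal_iff]
  intro i
  split_ifs
  exacts [Complex.zero_lt_real.2 hp, one_pos]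

/-- The perturbation `diag(ε, 1, …, 1) + i A` of `I_n + i A`; for `ε = p⁻²` it is congruent to
`1 + i I_n^p A I_n^p` through `I_n^p`. -/
noncomputable def perturbedCmat (A : Matrix (Fin (n + 1)) (Fin (n + 1)) ℝ) (ε : ℝ) :
    Matrix (Fin (n + 1)) (Fin (n + 1)) ℂ :=
  (Inp n ε).map (fun x => (x : ℂ)) + Complex.I • A.map (fun x => (x : ℂ))

theorem perturbedCmat_zero (A : Matrix (Fin (n + 1)) (Fin (n + 1)) ℝ) :
    perturbedCmat A 0 = cmat A := by
  rw [perturbedCmat, cmat, Inmat, map_ofReal_inp, Complex.ofReal_zero]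

theorem continuous_perturbedCmat (A : Matrix (Fin (n + 1)) (Fin (n + 1)) ℝ) :
    Continuous (perturbedCmat A) := by
  unfold perturbedCmat
  simp only [map_ofReal_inp]
  refine (Continuous.matrix_diagonal <| continuous_pi fun i => ?_).add continuous_const
  split_ifs <;> fun_prop

theorem isAccretive_perturbedCmat {A : Matrix (Fin (n + 1)) (Fin (n + 1)) ℝ} (hA : A.IsSymm)
    {ε : ℝ} (hε : 0 ≤ ε) : IsAccretive (perturbedCmat A ε) := by
  refine isAccretive_add_I_smul ?_ ?_
  · rw [map_ofReal_inp, Matrix.posSemidef_diagonal_iff]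
    intro i
    split_ifs
    exacts [Complex.zero_le_real.2 hε, zero_le_one]
  · exact (Matrix.isHermitian_iff_isSymm.2 hA).map _ fun x => (Complex.conj_ofReal x).symm

theorem inp_mul_perturbedCmat_mul_inp (A : Matrix (Fin (n + 1)) (Fin (n + 1)) ℝ) {p : ℝ}
    (hp : p ≠ 0) :
    (Inp n p).map (fun x => (x : ℂ)) * perturbedCmat A (p ^ 2)⁻¹ *
        (Inp n p).map (fun x => (x : ℂ)) =
      1 + Complex.I • (Inp n p * A * Inp n p).map (fun x => (x : ℂ)) := by
  have hone : Inp n p * Inp n (p ^ 2)⁻¹ * Inp n p = 1 := by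
    rw [Inp, Inp, Matrix.diagonal_mul_diagonal, Matrix.diagonal_mul_diagonal,
      ← Matrix.diagonal_one]
    congr 1 with i
    split_ifs
    · field_simp
    · norm_num
  have hmap (B : Matrix (Fin (n + 1)) (Fin (n + 1)) ℝ) :
      (Inp n p * B * Inp n p).map (fun x => (x : ℂ)) = (Inp n p).map (fun x => (x : ℂ)) *
        B.map (fun x => (x : ℂ)) * (Inp n p).map (fun x => (x : ℂ)) := by
    simp only [← Complex.ofRealHom_eq_coe, Matrix.map_mul]
  rw [perturbedCmat, mul_add, add_mul, ← hmap, hone, Matrix.mul_smul, Matrix.smul_mul, hmap]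
  simp only [Matrix.map_one, Complex.ofReal_zero, Complex.ofReal_one]

theorem liftedAngle_inp_mul_mul_inp {A : Matrix (Fin (n + 1)) (Fin (n + 1)) ℝ} (hA : A.IsSymm)
    {p : ℝ} (hp : 0 < p) (hdet : (perturbedCmat A (p ^ 2)⁻¹).det ≠ 0) :
    liftedAngle (Inp n p * A * Inp n p) = argSum (perturbedCmat A (p ^ 2)⁻¹) := by
  have hherm : (Inp n p * A * Inp n p).IsHermitian := by
    have hInp : (Inp n p)ᴴ = Inp n p := by
      rw [Matrix.conjTranspose_eq_transpose_of_trivial, Inp, Matrix.diagonal_transpose]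
    simpa only [hInp] using
      Matrix.isHermitian_conjTranspose_mul_mul (Inp n p) (Matrix.isHermitian_iff_isSymm.2 hA)
  rw [liftedAngle_eq_argSum hherm, ← inp_mul_perturbedCmat_mul_inp A hp.ne']
  exact argSum_mul_mul_of_posDef (posDef_map_ofReal_inp hp)
    (isAccretive_perturbedCmat hA (by positivity)) hdet

theorem tendsto_perturbedCmat_atTop (A : Matrix (Fin (n + 1)) (Fin (n + 1)) ℝ) :
    Tendsto (fun p : ℝ => perturbedCmat A (p ^ 2)⁻¹) atTop (𝓝 (cmat A)) := by
  rw [← perturbedCmat_zero]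
  exact ((continuous_perturbedCmat A).tendsto 0).comp <|
    tendsto_inv_atTop_zero.comp (tendsto_pow_atTop two_ne_zero)

theorem spaceTimeAngle_of_det_ne_zero {A : Matrix (Fin (n + 1)) (Fin (n + 1)) ℝ}
    (hdet : (cmat A).det ≠ 0) : spaceTimeAngle A = argSum (cmat A) :=
  if_neg hdet

end

/-- For every `A ∈ Sym(ℝ^{n+1}) \ S`,
`Θ̃(A) = lim_{p→∞} ∑_j arctan(λ_j(I_n^p A I_n^p))`, i.e. `Θ̃(A)` is the limit as `p → ∞`
of the lifted Lagrangian angle of the real symmetric matrix `I_n^p A I_n^p`. -/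
theorem spaceTimeAngle_limit (n : ℕ) (A : Matrix (Fin (n+1)) (Fin (n+1)) ℝ)
    (hA : A.IsSymm) (hdet : (cmat A).det ≠ 0) :
    Filter.Tendsto (fun p : ℝ => liftedAngle (Inp n p * A * Inp n p))
      Filter.atTop (nhds (spaceTimeAngle A)) := by
  have hlim := tendsto_perturbedCmat_atTop A
  have hdetp : ∀ᶠ p : ℝ in atTop, (perturbedCmat A (p ^ 2)⁻¹).det ≠ 0 :=
    ((continuous_id.matrix_det.tendsto _).comp hlim).eventually_ne hdet
  have hacc (p : ℝ) : IsAccretive (perturbedCmat A (p ^ 2)⁻¹) :=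
    isAccretive_perturbedCmat hA (by positivity)
  have hacc₀ : IsAccretive (cmat A) :=
    perturbedCmat_zero A ▸ isAccretive_perturbedCmat hA le_rfl
  rw [spaceTimeAngle_of_det_ne_zero hdet]
  refine Tendsto.congr' ?_ <| (IsAccretive.continuousOn_argSum _ ⟨hacc₀, hdet⟩).tendsto.comp <|
    tendsto_nhdsWithin_iff.2 ⟨hlim, hdetp.mono fun p hp => ⟨hacc p, hp⟩⟩
  filter_upwards [eventually_gt_atTop 0, hdetp] with p hp hdet
  exact (liftedAngle_inp_mul_mul_inp hA hp hdet).symm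
end

section
/- The function Θ̃ is upper semicontinuous on Sym(ℝ^{n+1}), and it is the smallest upper semicontinuous extension of its restriction to Sym(ℝ^{n+1}) \ S: if g : Sym(ℝ^{n+1}) → ℝ is upper semicontinuous and g(A) = Θ̃(A) for every A ∈ Sym(ℝ^{n+1}) \ S, then g(A) ≥ Θ̃(A) for every A ∈ Sym(ℝ^{n+1}). -/
open Real Filter Matrix

/-!
The eigenvalues of `I_n + iA` lie in the closed right half-plane, since `I_n` is positive
semidefinite and `A` is Hermitian. On that half-plane `arg`, given its supremum `π / 2` as value at
the origin, is upper semicontinuous. If `I_n + iA` is singular then `A` vanishes outside the block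
`A⁺`, so `I_n + iA = 0 ⊕ (1 + iA⁺)` with `1 + iA⁺` invertible; thus `0` is a simple eigenvalue and
`Θ̃(A)` is the sum of this modified argument over all the eigenvalues. Such a sum is upper
semicontinuous because the eigenvalues depend continuously on the matrix as an unordered tuple.
Minimality holds because putting a small `a > 0` in the corner entry of a singular `A` moves the
eigenvalue `0` to `ia`, whose argument is `π / 2`: the angle keeps its value while the matrix leaves
`S`.
-/

open Polynomial
open scoped Topology ComplexOrder

section CharpolyRoots

variable {ι : Type*} [Fintype ι]

theorem roots_prod_univ_X_sub_C {R : Type*} [CommRing R] [IsDomain R] (r : ι → R) :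
    (∏ i, (X - C (r i))).roots = Finset.univ.val.map r := by
  simpa only [Multiset.map_map] using!
    roots_multiset_prod_X_sub_C (Finset.univ.val.map r)

variable [DecidableEq ι]

theorem exists_charpoly_eq_prod_X_sub_C {K : Type*} [Field K] [IsAlgClosed K]
    (M : Matrix ι ι K) : ∃ r : ι → K, M.charpoly = ∏ i, (X - C (r i)) := by
  classical
  have hsplits := IsAlgClosed.splits M.charpoly
  have hcard : Fintype.card ι = Fintype.card M.charpoly.roots.ToType := by
    rw [Multiset.card_coe, ← hsplits.natDegree_eq_card_roots, charpoly_natDegree_eq_dim]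
  let e := Fintype.equivOfCardEq hcard
  refine ⟨fun i => (e i).1, ?_⟩
  calc M.charpoly = (M.charpoly.roots.map fun z => X - C z).prod :=
        hsplits.eq_prod_roots_of_monic M.charpoly_monic
    _ = ∏ x : M.charpoly.roots.ToType, (X - C x.1) :=
        congrArg Multiset.prod (Multiset.map_univ _ fun z => X - C z).symm
    _ = ∏ i, (X - C (e i).1) := (e.prod_comp fun x => X - C x.1).symm

theorem exists_mulVec_eq_smul_of_mem_roots_charpoly {K : Type*} [Field K] {M : Matrix ι ι K}
    {z : K} (hz : z ∈ M.charpoly.roots) : ∃ v ≠ 0, M *ᵥ v = z • v := by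
  have hspec : z ∈ spectrum K M.toLin' := by
    rw [spectrum_toLin']
    exact mem_spectrum_of_isRoot_charpoly (isRoot_of_mem_roots hz)
  obtain ⟨v, hv⟩ :=
    (Module.End.hasEigenvalue_iff_mem_spectrum.2 hspec).exists_hasEigenvector
  exact ⟨v, hv.2, hv.apply_eq_smul⟩

theorem charpoly_eq_mul_of_col_zero_eq_zero {R : Type*} [CommRing R] {m : ℕ}
    (M : Matrix (Fin (m + 1)) (Fin (m + 1)) R) (hM : ∀ i : Fin m, M i.succ 0 = 0) :
    M.charpoly = (X - C (M 0 0)) * (M.submatrix Fin.succ Fin.succ).charpoly := by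
  have hcol : ∀ i : Fin m, M.charmatrix i.succ 0 = 0 := fun i => by
    rw [charmatrix_apply_ne _ _ _ (Fin.succ_ne_zero i), hM, C_0, neg_zero]
  have hblock : M.charmatrix.submatrix (Fin.succAbove 0) Fin.succ =
      (M.submatrix Fin.succ Fin.succ).charmatrix := by
    ext i j : 2
    simp [charmatrix_apply, diagonal_apply]
  rw [Matrix.charpoly, det_succ_column_zero, Fin.sum_univ_succ]
  simp only [hcol, mul_zero, zero_mul, Finset.sum_const_zero, add_zero, Fin.val_zero, pow_zero,
    one_mul, charmatrix_apply_eq, hblock, Matrix.charpoly]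

theorem continuous_eval_charpoly {R : Type*} [CommRing R] [TopologicalSpace R]
    [IsTopologicalRing R] (z : R) : Continuous fun M : Matrix ι ι R => M.charpoly.eval z := by
  simp only [eval_charpoly]
  exact (continuous_const.sub continuous_id).matrix_det

attribute [local instance] Matrix.linftyOpNormedRing Matrix.linftyOpNormedAlgebra in
theorem exists_eventually_norm_le_of_mem_roots_charpoly (M : Matrix ι ι ℂ) :
    ∃ R : ℝ, ∀ᶠ N in 𝓝 M, ∀ z ∈ N.charpoly.roots, ‖z‖ ≤ R := by
  refine ⟨(‖M‖ + 1) * ‖(1 : Matrix ι ι ℂ)‖, ?_⟩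
  filter_upwards [continuous_norm.continuousAt.eventually_lt_const (lt_add_one ‖M‖)]
    with N hN z hz
  have hspec : z ∈ spectrum ℂ N := mem_spectrum_of_isRoot_charpoly (isRoot_of_mem_roots hz)
  exact (spectrum.norm_le_norm_mul_of_mem hspec).trans (by gcongr)

theorem exists_tendsto_of_charpoly_eq_prod_X_sub_C {U : Ultrafilter (Matrix ι ι ℂ)}
    {M : Matrix ι ι ℂ} (hU : U ≤ 𝓝 M) {r : Matrix ι ι ℂ → ι → ℂ}
    (hr : ∀ N, N.charpoly = ∏ i, (X - C (r N i))) :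
    ∃ r₀, Tendsto r U (𝓝 r₀) ∧ M.charpoly = ∏ i, (X - C (r₀ i)) := by
  obtain ⟨R, hR⟩ := exists_eventually_norm_le_of_mem_roots_charpoly M
  have hbdd : ∀ᶠ N in U, r N ∈ Set.univ.pi fun _ : ι => Metric.closedBall (0 : ℂ) R := by
    filter_upwards [hU hR] with N hN i _
    refine mem_closedBall_zero_iff.2 (hN _ ?_)
    rw [hr, roots_prod_univ_X_sub_C]
    exact Multiset.mem_map_of_mem _ (Finset.mem_univ_val i)
  obtain ⟨r₀, -, hr₀⟩ := (isCompact_univ_pi fun _ => isCompact_closedBall _ _).ultrafilter_le_nhds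
    (U.map r) (le_principal_iff.2 hbdd)
  refine ⟨r₀, hr₀, Polynomial.funext fun z => ?_⟩
  have hlim : Tendsto (fun N : Matrix ι ι ℂ => N.charpoly.eval z) U (𝓝 (M.charpoly.eval z)) :=
    ((continuous_eval_charpoly z).tendsto M).mono_left hU
  have hlim' : Tendsto (fun N : Matrix ι ι ℂ => N.charpoly.eval z) U (𝓝 (∏ i, (z - r₀ i))) := by
    simp only [hr, eval_prod, eval_sub, eval_X, eval_C]
    exact tendsto_finsetProd _ fun i _ => tendsto_const_nhds.sub (tendsto_pi_nhds.1 hr₀ i)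
  simpa only [eval_prod, eval_sub, eval_X, eval_C] using tendsto_nhds_unique hlim hlim'

theorem upperSemicontinuousOn_sum_map_roots_charpoly {γ : Type*} [AddCommMonoid γ] [LinearOrder γ]
    [IsOrderedAddMonoid γ] [TopologicalSpace γ] [OrderTopology γ] [ContinuousAdd γ] {f : ℂ → γ}
    {s : Set ℂ} (hf : UpperSemicontinuousOn f s) :
    UpperSemicontinuousOn (fun M : Matrix ι ι ℂ => (M.charpoly.roots.map f).sum)
      {M | ∀ z ∈ M.charpoly.roots, z ∈ s} := by
  choose r hr using exists_charpoly_eq_prod_X_sub_C (ι := ι) (K := ℂ)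
  have hsum {M : Matrix ι ι ℂ} {ρ : ι → ℂ} (hM : M.charpoly = ∏ i, (X - C (ρ i))) :
      (M.charpoly.roots.map f).sum = ∑ i, f (ρ i) := by
    rw [hM, roots_prod_univ_X_sub_C, Multiset.map_map]
    rfl
  have hmem {M : Matrix ι ι ℂ} {ρ : ι → ℂ} (hM : M.charpoly = ∏ i, (X - C (ρ i)))
      (hMs : ∀ z ∈ M.charpoly.roots, z ∈ s) : ρ ∈ Set.univ.pi fun _ => s := fun i _ => by
    rw [hM, roots_prod_univ_X_sub_C] at hMs
    exact hMs _ (Multiset.mem_map_of_mem _ (Finset.mem_univ_val i))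
  have husc : UpperSemicontinuousOn (fun ρ : ι → ℂ => ∑ i, f (ρ i)) (Set.univ.pi fun _ => s) :=
    upperSemicontinuousOn_sum fun i _ =>
      hf.comp (continuous_apply i).continuousOn fun ρ hρ => hρ i (Set.mem_univ i)
  intro M hM y hy
  refine mem_iff_ultrafilter.2 fun U hU => ?_
  obtain ⟨r₀, hlim, hr₀⟩ :=
    exists_tendsto_of_charpoly_eq_prod_X_sub_C (hU.trans nhdsWithin_le_nhds) hr
  replace hy : ∑ i, f (r₀ i) < y := (hsum hr₀).symm.trans_lt hy
  have hmemU : ∀ᶠ N in U, r N ∈ Set.univ.pi fun _ => s :=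
    mem_of_superset (hU self_mem_nhdsWithin) fun N => hmem (hr N)
  have hlt : ∀ᶠ N in U, ∑ i, f (r N i) < y :=
    (tendsto_nhdsWithin_iff.2 ⟨hlim, hmemU⟩).eventually (husc r₀ (hmem hr₀ hM) y hy)
  exact hlt.mono fun N hN => (hsum (hr N)).trans_lt hN

end CharpolyRoots

section AccretiveMatrices

variable {ι : Type*} [Fintype ι] {P H : Matrix ι ι ℂ}

theorem re_star_dotProduct_add_I_smul_mulVec (hH : H.IsHermitian) (v : ι → ℂ) :
    (star v ⬝ᵥ (P + Complex.I • H) *ᵥ v).re = (star v ⬝ᵥ P *ᵥ v).re := by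
  have him : (star v ⬝ᵥ H *ᵥ v).im = 0 := hH.im_star_dotProduct_mulVec_self v
  simp [add_mulVec, smul_mulVec, him]

theorem mulVec_eq_zero_of_add_I_smul_mulVec_eq_zero (hP : P.PosSemidef) (hH : H.IsHermitian)
    {v : ι → ℂ} (hv : (P + Complex.I • H) *ᵥ v = 0) : P *ᵥ v = 0 ∧ H *ᵥ v = 0 := by
  have hre : (star v ⬝ᵥ P *ᵥ v).re = 0 := by
    rw [← re_star_dotProduct_add_I_smul_mulVec hH, hv, dotProduct_zero, Complex.zero_re]
  have him : (star v ⬝ᵥ P *ᵥ v).im = 0 := hP.1.im_star_dotProduct_mulVec_self v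
  have hPv : P *ᵥ v = 0 := (hP.dotProduct_mulVec_zero_iff v).1 (Complex.ext hre him)
  rw [add_mulVec, hPv, zero_add, smul_mulVec] at hv
  exact ⟨hPv, (smul_eq_zero_iff_right Complex.I_ne_zero).1 hv⟩

variable [DecidableEq ι]

theorem re_nonneg_of_mem_roots_charpoly_add_I_smul (hP : P.PosSemidef) (hH : H.IsHermitian)
    {z : ℂ} (hz : z ∈ (P + Complex.I • H).charpoly.roots) : 0 ≤ z.re := by
  obtain ⟨v, hv, hvz⟩ := exists_mulVec_eq_smul_of_mem_roots_charpoly hz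
  obtain ⟨hpos, him⟩ := Complex.pos_iff.1 (dotProduct_star_self_pos_iff.2 hv)
  have hform : z.re * (star v ⬝ᵥ v).re = (star v ⬝ᵥ P *ᵥ v).re := by
    rw [← re_star_dotProduct_add_I_smul_mulVec hH, hvz, dotProduct_smul, smul_eq_mul,
      Complex.mul_re, ← him, mul_zero, sub_zero]
  exact nonneg_of_mul_nonneg_left (hform ▸ hP.re_dotProduct_nonneg v) hpos

theorem det_one_add_I_smul_ne_zero (hH : H.IsHermitian) : (1 + Complex.I • H).det ≠ 0 := by
  intro hdet
  obtain ⟨v, hv, hHv⟩ := exists_mulVec_eq_zero_iff.2 hdet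
  have h := (mulVec_eq_zero_of_add_I_smul_mulVec_eq_zero PosSemidef.one hH hHv).1
  exact hv (by rwa [one_mulVec] at h)

end AccretiveMatrices

/-- The argument extended to the origin by `π / 2`, the value making it upper semicontinuous on the
closed right half-plane. -/
noncomputable def uscArg : ℂ → ℝ :=
  Function.update Complex.arg 0 (π / 2)

theorem uscArg_zero : uscArg 0 = π / 2 :=
  Function.update_self ..

theorem uscArg_of_ne_zero {z : ℂ} (hz : z ≠ 0) : uscArg z = z.arg :=
  Function.update_of_ne hz ..

theorem uscArg_le_pi_div_two {z : ℂ} (hz : 0 ≤ z.re) : uscArg z ≤ π / 2 := by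
  rcases eq_or_ne z 0 with rfl | hz0
  · exact uscArg_zero.le
  · exact (uscArg_of_ne_zero hz0).trans_le (Complex.arg_le_pi_div_two_iff.2 (.inl hz))

theorem uscArg_I_mul_ofReal {a : ℝ} (ha : 0 ≤ a) : uscArg (Complex.I * a) = π / 2 := by
  rcases ha.eq_or_lt with rfl | ha
  · rw [Complex.ofReal_zero, mul_zero, uscArg_zero]
  · rw [uscArg_of_ne_zero (mul_ne_zero Complex.I_ne_zero (Complex.ofReal_ne_zero.2 ha.ne')),
      Complex.arg_mul_real ha, Complex.arg_I]

theorem upperSemicontinuousOn_uscArg : UpperSemicontinuousOn uscArg {z | 0 ≤ z.re} := by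
  intro z hz y hy
  rcases eq_or_ne z 0 with rfl | hz0
  · filter_upwards [self_mem_nhdsWithin] with w hw
    exact (uscArg_le_pi_div_two hw).trans_lt (uscArg_zero ▸ hy)
  · have hslit : z ∈ Complex.slitPlane := by
      rw [Complex.mem_slitPlane_iff, or_iff_not_imp_right, not_not]
      exact fun him => lt_of_le_of_ne hz fun hre => hz0 (Complex.ext hre.symm him)
    have hcont : ContinuousAt uscArg z :=
      (continuousAt_update_of_ne hz0).2 (Complex.continuousAt_arg hslit)
    exact hcont.upperSemicontinuousAt.upperSemicontinuousWithinAt _ y hy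

section SpaceTimeAngle

theorem isHermitian_map_ofReal {ι : Type*} {A : Matrix ι ι ℝ} (hA : A.IsSymm) :
    (A.map fun a => (a : ℂ)).IsHermitian :=
  IsHermitian.map (by simpa using! hA) _ fun a => (Complex.conj_ofReal a).symm

theorem posSemidef_Inmat (n : ℕ) : (Inmat n).PosSemidef :=
  PosSemidef.diagonal fun i => by
    dsimp only [Pi.zero_apply]
    split_ifs
    exacts [le_rfl, zero_le_one]

variable {n : ℕ} {A : Matrix (Fin (n + 1)) (Fin (n + 1)) ℝ}

theorem continuous_cmat : Continuous (cmat (n := n)) :=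
  continuous_const.add (.const_smul (continuous_id.matrix_map Complex.continuous_ofReal) Complex.I)

theorem cmat_submatrix_succ (A : Matrix (Fin (n + 1)) (Fin (n + 1)) ℝ) :
    (cmat A).submatrix Fin.succ Fin.succ =
      1 + Complex.I • (Aplus A).map fun a => (a : ℂ) := by
  ext i j
  simp [cmat, Inmat, Aplus, diagonal_apply, one_apply]

theorem apply_zero_eq_zero_of_det_cmat_eq_zero (hA : A.IsSymm) (hdet : (cmat A).det = 0)
    (i : Fin (n + 1)) : A i 0 = 0 := by
  obtain ⟨v, hv, hker⟩ := exists_mulVec_eq_zero_iff.2 hdet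
  obtain ⟨hIv, hAv⟩ := mulVec_eq_zero_of_add_I_smul_mulVec_eq_zero (posSemidef_Inmat n)
    (isHermitian_map_ofReal hA) hker
  have hsucc : ∀ j : Fin n, v j.succ = 0 := fun j => by
    simpa [Inmat, mulVec_diagonal] using congrFun hIv j.succ
  have hzero : v 0 ≠ 0 := fun h0 => hv (funext (Fin.cases h0 hsucc))
  simpa [mulVec, dotProduct, Fin.sum_univ_succ, hsucc, hzero] using congrFun hAv i

theorem roots_charpoly_cmat_of_col_zero_eq_zero (hcol : ∀ i : Fin n, A i.succ 0 = 0) :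
    (cmat A).charpoly.roots = (Complex.I * A 0 0) ::ₘ
      (1 + Complex.I • (Aplus A).map fun a => (a : ℂ)).charpoly.roots := by
  have hcorner : cmat A 0 0 = Complex.I * A 0 0 := by simp [cmat, Inmat]
  have hcmat : ∀ i : Fin n, cmat A i.succ 0 = 0 := fun i => by
    simp [cmat, Inmat, hcol]
  rw [charpoly_eq_mul_of_col_zero_eq_zero _ hcmat, hcorner, cmat_submatrix_succ,
    roots_mul (mul_ne_zero (X_sub_C_ne_zero _) (charpoly_monic _).ne_zero), roots_X_sub_C,
    Multiset.singleton_add]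

theorem zero_notMem_roots_charpoly_one_add_I_smul_Aplus (hA : A.IsSymm) :
    0 ∉ (1 + Complex.I • (Aplus A).map fun a => (a : ℂ)).charpoly.roots := by
  rw [← Multiset.prod_eq_zero_iff, ← det_eq_prod_roots_charpoly]
  exact det_one_add_I_smul_ne_zero (isHermitian_map_ofReal (hA.submatrix Fin.succ))

theorem spaceTimeAngle_eq_sum_uscArg (hA : A.IsSymm) :
    spaceTimeAngle A = ((cmat A).charpoly.roots.map uscArg).sum := by
  have harg {s : Multiset ℂ} (hs : 0 ∉ s) : s.map Complex.arg = s.map uscArg :=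
    Multiset.map_congr rfl fun z hz => (uscArg_of_ne_zero (ne_of_mem_of_not_mem hz hs)).symm
  unfold spaceTimeAngle
  split_ifs with hdet
  · have hcol := apply_zero_eq_zero_of_det_cmat_eq_zero hA hdet
    have h0 := zero_notMem_roots_charpoly_one_add_I_smul_Aplus hA
    rw [roots_charpoly_cmat_of_col_zero_eq_zero fun i => hcol i.succ, hcol 0, Complex.ofReal_zero,
      mul_zero, Multiset.filter_cons_of_neg _ (by simp),
      Multiset.filter_eq_self.2 fun z hz => ne_of_mem_of_not_mem hz h0, harg h0,
      Multiset.map_cons, Multiset.sum_cons, uscArg_zero]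
  · rw [harg]
    rwa [← Multiset.prod_eq_zero_iff, ← det_eq_prod_roots_charpoly]

theorem upperSemicontinuousOn_spaceTimeAngle (n : ℕ) :
    UpperSemicontinuousOn (spaceTimeAngle (n := n)) {A | A.IsSymm} := by
  have husc : UpperSemicontinuousOn
      (fun A : Matrix (Fin (n + 1)) (Fin (n + 1)) ℝ => ((cmat A).charpoly.roots.map uscArg).sum)
      {A | A.IsSymm} :=
    (upperSemicontinuousOn_sum_map_roots_charpoly upperSemicontinuousOn_uscArg).comp
      continuous_cmat.continuousOn fun A hA z =>
        re_nonneg_of_mem_roots_charpoly_add_I_smul (posSemidef_Inmat n) (isHermitian_map_ofReal hA)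
  exact fun A hA => UpperSemicontinuousWithinAt.congr_of_eventuallyEq (husc A hA) hA <|
    eventually_mem_nhdsWithin.mono fun B hB => (spaceTimeAngle_eq_sum_uscArg hB).symm

theorem isSymm_add_single_zero (hA : A.IsSymm) (a : ℝ) :
    (A + Matrix.single 0 0 a).IsSymm :=
  hA.add (transpose_single ..)

theorem roots_charpoly_cmat_add_single (hA : A.IsSymm) (hdet : (cmat A).det = 0) (a : ℝ) :
    (cmat (A + Matrix.single 0 0 a)).charpoly.roots = (Complex.I * a) ::ₘ
      (1 + Complex.I • (Aplus A).map fun a => (a : ℂ)).charpoly.roots := by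
  have hcol := apply_zero_eq_zero_of_det_cmat_eq_zero hA hdet
  have hblock : Aplus (A + Matrix.single 0 0 a) = Aplus A := by
    ext i j
    simp [Aplus, (Fin.succ_ne_zero _).symm]
  rw [roots_charpoly_cmat_of_col_zero_eq_zero, hblock]
  · simp [hcol]
  · simp [hcol, (Fin.succ_ne_zero _).symm]

theorem det_cmat_add_single_ne_zero (hA : A.IsSymm) (hdet : (cmat A).det = 0) {a : ℝ}
    (ha : a ≠ 0) : (cmat (A + Matrix.single 0 0 a)).det ≠ 0 := by
  rw [det_eq_prod_roots_charpoly, roots_charpoly_cmat_add_single hA hdet, Multiset.prod_cons]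
  exact mul_ne_zero (mul_ne_zero Complex.I_ne_zero (Complex.ofReal_ne_zero.2 ha))
    (Multiset.prod_eq_zero_iff.not.2 (zero_notMem_roots_charpoly_one_add_I_smul_Aplus hA))

theorem spaceTimeAngle_add_single (hA : A.IsSymm) (hdet : (cmat A).det = 0) {a : ℝ}
    (ha : 0 ≤ a) : spaceTimeAngle (A + Matrix.single 0 0 a) = spaceTimeAngle A := by
  have hsum {b : ℝ} (hb : 0 ≤ b) : spaceTimeAngle (A + Matrix.single 0 0 b) = π / 2 +
      ((1 + Complex.I • (Aplus A).map fun a => (a : ℂ)).charpoly.roots.map uscArg).sum := by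
    rw [spaceTimeAngle_eq_sum_uscArg (isSymm_add_single_zero hA b),
      roots_charpoly_cmat_add_single hA hdet, Multiset.map_cons, Multiset.sum_cons,
      uscArg_I_mul_ofReal hb]
  rw [hsum ha, ← hsum le_rfl, single_zero, add_zero]

theorem frequently_det_cmat_ne_zero_and_spaceTimeAngle_eq (hA : A.IsSymm) :
    ∃ᶠ B in 𝓝[{B | B.IsSymm}] A, (cmat B).det ≠ 0 ∧ spaceTimeAngle B = spaceTimeAngle A := by
  by_cases hdet : (cmat A).det = 0
  · have hcont : Continuous fun a : ℝ => A + Matrix.single 0 0 a :=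
      continuous_const.add (singleLinearMap ℝ 0 0 : ℝ →ₗ[ℝ] _).continuous_of_finiteDimensional
    have hlim : Tendsto (fun a : ℝ => A + Matrix.single 0 0 a) (𝓝[>] 0) (𝓝[{B | B.IsSymm}] A) := by
      refine tendsto_nhdsWithin_iff.2 ⟨?_, .of_forall (isSymm_add_single_zero hA)⟩
      simpa only [single_zero, add_zero] using (hcont.tendsto 0).mono_left nhdsWithin_le_nhds
    have hpos : ∀ᶠ a : ℝ in 𝓝[>] 0, 0 < a := self_mem_nhdsWithin
    exact hlim.frequently (hpos.mono fun a ha =>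
      ⟨det_cmat_add_single_ne_zero hA hdet ha.ne',
        spaceTimeAngle_add_single hA hdet ha.le⟩).frequently
  · exact frequently_iff.2 fun hs => ⟨A, mem_of_mem_nhdsWithin (Set.mem_ofPred.2 hA) hs, hdet, rfl⟩

end SpaceTimeAngle

/-- `Θ̃` is upper semicontinuous on `Sym(ℝ^{n+1})`, and it is the smallest upper
semicontinuous function on `Sym(ℝ^{n+1})` extending its restriction to
`Sym(ℝ^{n+1}) \ S`. -/
theorem spaceTimeAngle_usc_minimal (n : ℕ) :
    UpperSemicontinuousOn (spaceTimeAngle (n := n))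
      {A : Matrix (Fin (n+1)) (Fin (n+1)) ℝ | A.IsSymm} ∧
    ∀ g : Matrix (Fin (n+1)) (Fin (n+1)) ℝ → ℝ,
      UpperSemicontinuousOn g {A : Matrix (Fin (n+1)) (Fin (n+1)) ℝ | A.IsSymm} →
      (∀ A : Matrix (Fin (n+1)) (Fin (n+1)) ℝ, A.IsSymm → (cmat A).det ≠ 0 →
        g A = spaceTimeAngle A) →
      ∀ A : Matrix (Fin (n+1)) (Fin (n+1)) ℝ, A.IsSymm → spaceTimeAngle A ≤ g A := by
  refine ⟨upperSemicontinuousOn_spaceTimeAngle n, fun g hg hgΘ A hA => hg.frequently A hA _ ?_⟩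
  have hfreq := (frequently_det_cmat_ne_zero_and_spaceTimeAngle_eq hA).and_eventually
    (self_mem_nhdsWithin : ∀ᶠ B in 𝓝[{B | B.IsSymm}] A, B.IsSymm)
  exact hfreq.mono fun B ⟨⟨hdet, hΘ⟩, hB⟩ => (hgΘ B hB hdet ▸ hΘ).ge
end

section
/- Let D ⊂ ℝⁿ be a bounded strictly convex domain, a ∈ [(n−1)π/2, nπ/2), v ∈ C⁰(D̄), and f ∈ C⁰(∂D). Define the envelope P(v; f) := sup{ w ∈ F_a(D) : w ≤ v on D and limsup_{ξ→x} w(ξ) ≤ f(x) for all x ∈ ∂D }, and assume the candidate family is nonempty. Then P(v; f) equals its upper semicontinuous regularization, P(v; f) ∈ F_a(D), and P(v; f) is convex and continuous on D. Moreover P(v; f) ≤ v on D and limsup_{ξ→x} P(v; f)(ξ) ≤ f(x) for all x ∈ ∂D, i.e. P(v; f) is itself a candidate in its own defining family. -/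
open Real Filter Matrix

/-! If `a ≥ (n - 1)π/2`, a matrix of phase at least `a` has no negative eigenvalue, so `Fc n a`
consists of positive semidefinite matrices. Dually, every symmetric `B` with `e ⬝ᵥ (B *ᵥ e) ≥ 0` for
a single `e ≠ 0` lies in the dual subequation. A function of type `Fc n a` therefore stays subaffine
after adding a `C²` function that is constant along some direction. Penalising the squared distance
to a line and comparing on thin tubes around a segment of that line shows that it is convex along
the segment.

Convexity passes to the supremum because its epigraph is the intersection of the epigraphs of the
candidates. A steep quadratic polynomial minus a large constant is a finite candidate, as
`a < nπ/2`, so the envelope is a finite convex function, hence continuous. It is of type `Fc n a`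
because subaffinity is preserved by suprema. Strict convexity makes every boundary point exposed;
this gives affine functions above `f` on `∂D` that are arbitrarily close to `f` at a given point,
and by subaffinity they bound all candidates. -/

section Matrices

theorem le_eigenvalues_of_posSemidef_sub {ι : Type*} [Fintype ι] [DecidableEq ι]
    {A : Matrix ι ι ℝ} (hA : A.IsHermitian) {c : ℝ} (h : (A - c • 1).PosSemidef) (i : ι) :
    c ≤ hA.eigenvalues i := by
  have hmem : hA.eigenvalues i - c ∈ spectrum ℝ (A - c • 1) := by
    rw [← Algebra.algebraMap_eq_smul_one, ← spectrum.sub_singleton_eq]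
    exact Set.sub_mem_sub (hA.eigenvalues_mem_spectrum_real i) rfl
  exact sub_nonneg.1 ((posSemidef_iff_isHermitian_and_spectrum_nonneg.1 h).2 hmem)

theorem eventually_posDef {ι : Type*} [Finite ι] {A : Matrix ι ι ℝ} (hA : A.PosDef) :
    ∀ᶠ B in nhds A, B.IsHermitian → B.PosDef := by
  cases nonempty_fintype ι
  have hsphere : ∀ᶠ B in nhds A, ∀ e ∈ Metric.sphere (0 : ι → ℝ) 1, 0 < e ⬝ᵥ (B *ᵥ e) := by
    refine (isCompact_sphere _ _).eventually_forall_of_forall_eventually fun e he => ?_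
    have hcont : Continuous fun z : Matrix ι ι ℝ × (ι → ℝ) => z.2 ⬝ᵥ (z.1 *ᵥ z.2) := by fun_prop
    refine hcont.continuousAt.eventually_const_lt ?_
    simpa using hA.dotProduct_mulVec_pos (Metric.ne_of_mem_sphere he one_ne_zero)
  filter_upwards [hsphere] with B hB hBherm
  refine .of_dotProduct_mulVec_pos hBherm fun e he => ?_
  have hpos := hB (‖e‖⁻¹ • e) (by simp [norm_smul, he])
  rw [mulVec_smul, dotProduct_smul, smul_dotProduct, smul_smul, smul_eq_mul] at hpos
  exact pos_of_mul_pos_right hpos (by positivity)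

theorem mul_arctan_le_liftedAngle {m : ℕ} {A : Matrix (Fin m) (Fin m) ℝ} (hA : A.IsHermitian)
    {c : ℝ} (h : (A - c • 1).PosSemidef) : m * arctan c ≤ liftedAngle A := by
  rw [liftedAngle, dif_pos hA]
  simpa using Finset.card_nsmul_le_sum Finset.univ (fun i => arctan (hA.eigenvalues i)) (arctan c)
    fun i _ => arctan_mono (le_eigenvalues_of_posSemidef_sub hA h i)

theorem liftedAngle_lt_of_eigenvalues_neg {m : ℕ} {A : Matrix (Fin m) (Fin m) ℝ}
    (hA : A.IsHermitian) {i : Fin m} (hi : hA.eigenvalues i < 0) :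
    liftedAngle A < ((m : ℝ) - 1) * π / 2 := by
  rw [liftedAngle, dif_pos hA, ← Finset.add_sum_erase _ _ (Finset.mem_univ i)]
  have hrest := Finset.sum_le_card_nsmul (Finset.univ.erase i)
    (fun j => arctan (hA.eigenvalues j)) (π / 2) fun j _ => (arctan_lt_pi_div_two _).le
  rw [Finset.card_erase_of_mem (Finset.mem_univ i), Finset.card_univ, Fintype.card_fin,
    nsmul_eq_mul, Nat.cast_pred i.pos] at hrest
  linarith [arctan_lt_zero.2 hi]

theorem posSemidef_of_mem_Fc {m : ℕ} {a : ℝ} (ha : ((m : ℝ) - 1) * π / 2 ≤ a)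
    {A : Matrix (Fin m) (Fin m) ℝ} (hA : A ∈ Fc m a) : A.PosSemidef := by
  have hherm := isHermitian_iff_isSymm.2 hA.1
  refine hherm.posSemidef_iff_eigenvalues_nonneg.2 fun i => ?_
  by_contra! hi
  exact (liftedAngle_lt_of_eigenvalues_neg hherm hi).not_ge (ha.trans hA.2)

theorem mem_symInterior_Fc {m : ℕ} {a c d : ℝ} (hc : a ≤ m * arctan c) (hcd : c < d)
    {A : Matrix (Fin m) (Fin m) ℝ} (hA : (A - d • 1).PosSemidef) (hsymm : A.IsSymm) :
    A ∈ symInterior (Fc m a) := by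
  refine ⟨hsymm, ?_⟩
  have hpos : (A - c • 1).PosDef := by
    have := (PosDef.one (n := Fin m) (R := ℝ)).smul (sub_pos.2 hcd)
    convert this.posSemidef_add hA using 1
    module
  have hcont : Continuous fun B : Matrix (Fin m) (Fin m) ℝ => B - c • 1 := by fun_prop
  filter_upwards [hcont.continuousAt.eventually (eventually_posDef hpos)] with B hB hBsymm
  have hBherm := isHermitian_iff_isSymm.2 hBsymm
  have hBc := (hB (hBherm.sub (isHermitian_one.smul (.all c)))).posSemidef
  exact ⟨hBsymm, hc.trans (mul_arctan_le_liftedAngle hBherm hBc)⟩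

theorem mem_dualSub_Fc {m : ℕ} {a : ℝ} (ha : ((m : ℝ) - 1) * π / 2 ≤ a)
    {B : Matrix (Fin m) (Fin m) ℝ} (hB : B.IsSymm) {e : Fin m → ℝ} (he : e ≠ 0)
    (heB : 0 ≤ e ⬝ᵥ (B *ᵥ e)) : B ∈ dualSub (Fc m a) := by
  refine ⟨hB, fun ⟨_, hnear⟩ => ?_⟩
  have hcont : Continuous fun t : ℝ => -B - t • (1 : Matrix (Fin m) (Fin m) ℝ) := by fun_prop
  have hev : ∀ᶠ t : ℝ in nhdsWithin 0 (Set.Ioi 0),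
      (-B - t • (1 : Matrix (Fin m) (Fin m) ℝ)).IsSymm → -B - t • 1 ∈ Fc m a :=
    (hcont.tendsto' 0 (-B) (by simp)).mono_left nhdsWithin_le_nhds |>.eventually hnear
  obtain ⟨t, ht, ht0⟩ := (hev.and self_mem_nhdsWithin).exists
  have hnonneg := (posSemidef_of_mem_Fc ha
    (ht (hB.neg.sub (isSymm_one.smul t)))).dotProduct_mulVec_nonneg e
  simp only [star_trivial, sub_mulVec, neg_mulVec, smul_mulVec, one_mulVec, dotProduct_sub,
    dotProduct_neg, dotProduct_smul, smul_eq_mul] at hnonneg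
  have hee : 0 < e ⬝ᵥ e := by simpa using dotProduct_star_self_pos_iff.2 he
  linarith [mul_pos (Set.mem_Ioi.1 ht0) hee]

theorem exists_le_mul_arctan {m : ℕ} {a : ℝ} (ha : a < m * π / 2) :
    ∃ c : ℝ, a ≤ m * arctan c := by
  have hlim : Tendsto (fun c : ℝ => m * arctan c) atTop (nhds (m * (π / 2))) :=
    (tendsto_arctan_atTop.mono_right nhdsWithin_le_nhds).const_mul _
  obtain ⟨c, hc⟩ := (hlim.eventually_const_lt (mul_div_assoc (m : ℝ) π 2 ▸ ha)).exists
  exact ⟨c, hc.le⟩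

end Matrices

section Hessians

variable {n : ℕ}

theorem dotProduct_hessianMatrix_mulVec_eq_fderiv (v : (Fin n → ℝ) → ℝ) (x e : Fin n → ℝ) :
    e ⬝ᵥ (hessianMatrix v x *ᵥ e) = fderiv ℝ (fderiv ℝ v) x e e := by
  conv_rhs => rw [pi_eq_sum_univ' e]
  simp only [map_sum, map_smul, _root_.sum_apply, _root_.smul_apply, dotProduct, mulVec,
    hessianMatrix, of_apply, iteratedFDeriv_two_apply, cons_val_zero, cons_val_one,
    Finset.mul_sum, smul_eq_mul]
  rw [Finset.sum_comm]
  exact Finset.sum_congr rfl fun i _ => Finset.sum_congr rfl fun j _ => by ring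

theorem dotProduct_hessianMatrix_mulVec {v : (Fin n → ℝ) → ℝ} {x : Fin n → ℝ}
    (hv : ContDiffAt ℝ 2 v x) (e : Fin n → ℝ) :
    e ⬝ᵥ (hessianMatrix v x *ᵥ e) = deriv (deriv fun t : ℝ => v (x + t • e)) 0 := by
  have hline (t : ℝ) : HasDerivAt (fun t : ℝ => x + t • e) e t := by
    simpa using ((hasDerivAt_id t).smul_const e).const_add x
  have htendsto : Tendsto (fun t : ℝ => x + t • e) (nhds 0) (nhds x) := by
    simpa using (hline 0).continuousAt.tendsto
  have hfirst : deriv (fun t : ℝ => v (x + t • e)) =ᶠ[nhds 0]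
      fun t => fderiv ℝ v (x + t • e) e := by
    filter_upwards [htendsto.eventually (hv.eventually (by simp))] with t ht
    exact ((ht.differentiableAt (by simp)).hasFDerivAt.comp_hasDerivAt t (hline t)).deriv
  have hsecond : HasFDerivAt (fderiv ℝ v) (fderiv ℝ (fderiv ℝ v) x) (x + (0 : ℝ) • e) := by
    simpa using
      ((hv.fderiv_right (m := 1) (by norm_num)).differentiableAt one_ne_zero).hasFDerivAt
  have hcomp : HasDerivAt (fun t : ℝ => fderiv ℝ v (x + t • e)) (fderiv ℝ (fderiv ℝ v) x e) 0 :=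
    hsecond.comp_hasDerivAt 0 (hline 0)
  have happly : HasDerivAt (fun t : ℝ => fderiv ℝ v (x + t • e) e)
      (fderiv ℝ (fderiv ℝ v) x e e) 0 := by
    simpa using hcomp.clm_apply (hasDerivAt_const 0 e)
  rw [dotProduct_hessianMatrix_mulVec_eq_fderiv, hfirst.deriv_eq, happly.deriv]

theorem hessianMatrix_isSymm {v : (Fin n → ℝ) → ℝ} {x : Fin n → ℝ} (hv : ContDiffAt ℝ 2 v x) :
    (hessianMatrix v x).IsSymm := by
  ext i j
  simpa [hessianMatrix, iteratedFDeriv_two_apply] using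
    hv.isSymmSndFDerivAt (by simp) (Pi.single j 1) (Pi.single i 1)

theorem hessianMatrix_add {u v : (Fin n → ℝ) → ℝ} {x : Fin n → ℝ} (hu : ContDiffAt ℝ 2 u x)
    (hv : ContDiffAt ℝ 2 v x) :
    hessianMatrix (u + v) x = hessianMatrix u x + hessianMatrix v x := by
  ext i j
  simp [hessianMatrix, iteratedFDeriv_add_apply hu hv]

theorem hessianMatrix_affineMap (l : (Fin n → ℝ) →ᵃ[ℝ] ℝ) (x : Fin n → ℝ) :
    hessianMatrix l x = 0 := by
  have hl : fderiv ℝ l = fun _ => l.linear.toContinuousLinearMap := by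
    ext1 y
    exact (ContinuousAffineMap.mk l l.continuous_of_finiteDimensional).hasFDerivAt.fderiv
  ext i j
  simp [hessianMatrix, iteratedFDeriv_two_apply, hl]

theorem deriv_deriv_nonpos_of_isLocalMax {φ : ℝ → ℝ} {t : ℝ} (hφ : ContinuousAt φ t)
    (hmax : IsLocalMax φ t) : deriv (deriv φ) t ≤ 0 := by
  by_contra! hpos
  have hmin := isLocalMin_of_deriv_deriv_pos hpos hmax.deriv_eq_zero hφ
  have hconst : φ =ᶠ[nhds t] fun _ => φ t := by
    filter_upwards [hmin, hmax] with s hle hge using le_antisymm hge hle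
  simp [hconst.deriv.deriv_eq] at hpos

theorem posSemidef_neg_hessianMatrix_of_isLocalMax {g : (Fin n → ℝ) → ℝ} {x : Fin n → ℝ}
    (hg : ContDiffAt ℝ 2 g x) (hmax : IsLocalMax g x) : (-hessianMatrix g x).PosSemidef := by
  refine .of_dotProduct_mulVec_nonneg (isHermitian_iff_isSymm.2 (hessianMatrix_isSymm hg).neg)
    fun e => ?_
  have hline : ContinuousAt (fun t : ℝ => x + t • e) 0 := by fun_prop
  have htendsto : Tendsto (fun t : ℝ => x + t • e) (nhds 0) (nhds x) :=
    hline.tendsto.trans (by simp)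
  have hcont : ContinuousAt (fun t : ℝ => g (x + t • e)) 0 :=
    ContinuousAt.comp (by simpa using hg.continuousAt) hline
  have hmaxline : IsLocalMax (fun t : ℝ => g (x + t • e)) 0 := by
    simpa [IsLocalMax, IsMaxFilter] using htendsto.eventually hmax
  rw [star_trivial, neg_mulVec, dotProduct_neg, dotProduct_hessianMatrix_mulVec hg]
  exact neg_nonneg.2 (deriv_deriv_nonpos_of_isLocalMax hcont hmaxline)

theorem dotProduct_hessianMatrix_mulVec_of_invariant {V : (Fin n → ℝ) → ℝ} {x e : Fin n → ℝ}
    (hV : ContDiffAt ℝ 2 V x) (hinv : ∀ ξ (t : ℝ), V (ξ + t • e) = V ξ) :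
    e ⬝ᵥ (hessianMatrix V x *ᵥ e) = 0 := by
  simp [dotProduct_hessianMatrix_mulVec hV, hinv]

theorem dotProduct_hessianMatrix_mulVec_quadratic (d M : ℝ) (x e : Fin n → ℝ) :
    e ⬝ᵥ (hessianMatrix (fun ξ => d / 2 * (ξ ⬝ᵥ ξ) - M) x *ᵥ e) = d * (e ⬝ᵥ e) := by
  have hfirst : deriv (fun t : ℝ => d / 2 * ((x + t • e) ⬝ᵥ (x + t • e)) - M) =
      fun t => d * (x ⬝ᵥ e) + t * (d * (e ⬝ᵥ e)) := by
    ext t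
    have hexpand : (fun t : ℝ => d / 2 * ((x + t • e) ⬝ᵥ (x + t • e)) - M) =
        fun t => d / 2 * (x ⬝ᵥ x + t * (2 * (x ⬝ᵥ e)) + t ^ 2 * (e ⬝ᵥ e)) - M := by
      ext t
      simp only [add_dotProduct, dotProduct_add, smul_dotProduct, dotProduct_smul, smul_eq_mul,
        dotProduct_comm e x]
      ring
    rw [hexpand]
    have := ((((hasDerivAt_id t).mul_const (2 * (x ⬝ᵥ e))).const_add (x ⬝ᵥ x)).add
      ((hasDerivAt_pow 2 t).mul_const (e ⬝ᵥ e))).const_mul (d / 2) |>.sub_const M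
    refine this.deriv.trans ?_
    push_cast
    ring
  rw [dotProduct_hessianMatrix_mulVec (by unfold dotProduct; fun_prop), hfirst]
  simp

end Hessians

section TypeF

variable {n : ℕ}

theorem isTypeF_of_contDiffOn {F : Set (Matrix (Fin n) (Fin n) ℝ)} {U : Set (Fin n → ℝ)}
    (hU : IsOpen U) {u : (Fin n → ℝ) → ℝ} (hu : ContDiffOn ℝ 2 u U)
    (hF : ∀ x ∈ U, ∀ A : Matrix (Fin n) (Fin n) ℝ, A.IsSymm →
      (A - hessianMatrix u x).PosSemidef → A ∈ symInterior F) :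
    IsTypeF F U (fun x => (u x : EReal)) := by
  refine ⟨fun x _ => EReal.coe_ne_top _,
    (continuous_coe_real_ereal.comp_continuousOn hu.continuousOn).upperSemicontinuousOn, ?_⟩
  intro v hv hdual l K hK hKU hfrontier x hx
  simp only [← EReal.coe_add, EReal.coe_le_coe_iff] at hfrontier ⊢
  have hl : ContDiff ℝ 2 (-l) :=
    (ContinuousAffineMap.mk l l.continuous_of_finiteDimensional).contDiff.neg
  have hg : ContDiffOn ℝ 2 (u + v + ⇑(-l)) U := (hu.add hv).add hl.contDiffOn
  obtain ⟨z, hz, hmax⟩ := hK.exists_isMaxOn ⟨x, hx⟩ (hg.continuousOn.mono hKU)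
  have hzU := hU.mem_nhds (hKU hz)
  have hznotint : z ∉ interior K := fun hzint => by
    have hneg := posSemidef_neg_hessianMatrix_of_isLocalMax (hg.contDiffAt hzU)
      (hmax.isLocalMax (mem_interior_iff_mem_nhds.1 hzint))
    have huz := hu.contDiffAt hzU
    have hvz := hv.contDiffAt hzU
    have huvz : ContDiffAt ℝ 2 (u + v) z := huz.add hvz
    rw [hessianMatrix_add huvz hl.contDiffAt, hessianMatrix_affineMap, add_zero,
      hessianMatrix_add huz hvz, neg_add_rev, ← sub_eq_add_neg] at hneg
    exact (hdual z (hKU hz)).2 (hF z (hKU hz) _ (hessianMatrix_isSymm hvz).neg hneg)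
  have hxz : (u + v + ⇑(-l)) x ≤ (u + v + ⇑(-l)) z := hmax hx
  simp only [Pi.add_apply, AffineMap.coe_neg, Pi.neg_apply] at hxz
  linarith [hfrontier z ⟨subset_closure hz, hznotint⟩]

theorem isTypeF_quadratic {a c d : ℝ} (hc : a ≤ n * arctan c) (hcd : c < d)
    {U : Set (Fin n → ℝ)} (hU : IsOpen U) (M : ℝ) :
    IsTypeF (Fc n a) U (fun x => ((d / 2 * (x ⬝ᵥ x) - M : ℝ) : EReal)) := by
  refine isTypeF_of_contDiffOn hU (by unfold dotProduct; fun_prop) fun x _ A hA hpos => ?_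
  refine mem_symInterior_Fc hc hcd ?_ hA
  refine .of_dotProduct_mulVec_nonneg
    ((isHermitian_iff_isSymm.2 hA).sub (isHermitian_one.smul (.all d))) fun e => ?_
  have hnonneg := hpos.dotProduct_mulVec_nonneg e
  rw [star_trivial, sub_mulVec, dotProduct_sub, dotProduct_hessianMatrix_mulVec_quadratic]
    at hnonneg
  simpa [sub_mulVec, smul_mulVec, dotProduct_smul] using hnonneg

theorem isSubaffine_add_of_invariant {a : ℝ} (ha : ((n : ℝ) - 1) * π / 2 ≤ a)
    {D : Set (Fin n → ℝ)} (hD : IsOpen D) {w : (Fin n → ℝ) → EReal} (hw : IsTypeF (Fc n a) D w)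
    {V : (Fin n → ℝ) → ℝ} (hV : ContDiffOn ℝ 2 V D) {e : Fin n → ℝ} (he : e ≠ 0)
    (hinv : ∀ ξ (t : ℝ), V (ξ + t • e) = V ξ) :
    IsSubaffine D (fun x => w x + (V x : EReal)) := by
  refine hw.2.2 V hV fun x hx => ?_
  have hVx := hV.contDiffAt (hD.mem_nhds hx)
  exact mem_dualSub_Fc ha (hessianMatrix_isSymm hVx) he
    (dotProduct_hessianMatrix_mulVec_of_invariant hVx hinv).ge

theorem IsTypeF.isSubaffine [NeZero n] {a : ℝ} (ha : ((n : ℝ) - 1) * π / 2 ≤ a)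
    {D : Set (Fin n → ℝ)} (hD : IsOpen D) {w : (Fin n → ℝ) → EReal}
    (hw : IsTypeF (Fc n a) D w) : IsSubaffine D w := by
  simpa using isSubaffine_add_of_invariant ha hD hw (V := fun _ => 0) contDiffOn_const
    (one_ne_zero (α := Fin n → ℝ)) (fun _ _ => rfl)

end TypeF

section AxisTube

variable {n : ℕ} {L : (Fin n → ℝ) →L[ℝ] ℝ} {x e ξ : Fin n → ℝ} {r : ℝ}

/-- Squared Euclidean length of the projection of `ξ - x` to `ker L` along `e`, where `L e = 1`:
it measures how far `ξ` is from the line through `x` in the direction `e`. -/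
def axisDistSq (L : (Fin n → ℝ) →L[ℝ] ℝ) (x e ξ : Fin n → ℝ) : ℝ :=
  (ξ - x - L (ξ - x) • e) ⬝ᵥ (ξ - x - L (ξ - x) • e)

/-- The tube of radius `r` around the segment from `x` to `x + e`, cut off by the hyperplanes
parallel to `ker L` through its endpoints, where `L e = 1`. -/
def axisTube (L : (Fin n → ℝ) →L[ℝ] ℝ) (x e : Fin n → ℝ) (r : ℝ) : Set (Fin n → ℝ) :=
  {ξ | L (ξ - x) ∈ Set.Icc 0 1 ∧ axisDistSq L x e ξ ≤ r ^ 2}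

theorem axisDistSq_nonneg : 0 ≤ axisDistSq L x e ξ := by
  unfold axisDistSq dotProduct
  exact Finset.sum_nonneg fun _ _ => mul_self_nonneg _

theorem axisDistSq_add_smul (hL : L e = 1) (t : ℝ) :
    axisDistSq L x e (ξ + t • e) = axisDistSq L x e ξ := by
  have hoffset : ξ + t • e - x - L (ξ + t • e - x) • e = ξ - x - L (ξ - x) • e := by
    simp only [map_sub, map_add, map_smul, hL, smul_eq_mul]
    module
  rw [axisDistSq, hoffset, axisDistSq]

theorem axisDistSq_base_add_smul (hL : L e = 1) (t : ℝ) : axisDistSq L x e (x + t • e) = 0 := by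
  rw [axisDistSq_add_smul hL]
  simp [axisDistSq]

theorem contDiff_axisDistSq : ContDiff ℝ 2 (axisDistSq L x e) := by
  unfold axisDistSq dotProduct
  fun_prop

theorem dist_le_of_axisDistSq_le (hr : 0 ≤ r) (h : axisDistSq L x e ξ ≤ r ^ 2) :
    dist ξ (x + L (ξ - x) • e) ≤ r := by
  rw [dist_eq_norm, ← sub_sub, pi_norm_le_iff_of_nonneg hr]
  refine fun i => abs_le_of_sq_le_sq (le_trans ?_ h) hr
  rw [pow_two]
  exact Finset.single_le_sum (fun j _ => mul_self_nonneg ((ξ - x - L (ξ - x) • e) j))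
    (Finset.mem_univ i)

theorem isCompact_segment {E : Type*} [TopologicalSpace E] [AddCommGroup E] [Module ℝ E]
    [IsTopologicalAddGroup E] [ContinuousSMul ℝ E] (x y : E) : IsCompact (segment ℝ x y) := by
  rw [segment_eq_image']
  exact isCompact_Icc.image (by fun_prop)

theorem axisTube_subset_cthickening (hr : 0 ≤ r) :
    axisTube L x e r ⊆ Metric.cthickening r (segment ℝ x (x + e)) := by
  refine fun ξ hξ => Metric.mem_cthickening_of_dist_le ξ _ r _ ?_ (dist_le_of_axisDistSq_le hr hξ.2)
  rw [segment_eq_image']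
  exact ⟨L (ξ - x), hξ.1, by simp⟩

theorem isCompact_axisTube (hr : 0 ≤ r) : IsCompact (axisTube L x e r) := by
  refine (isCompact_segment x (x + e)).cthickening.of_isClosed_subset ?_
    (axisTube_subset_cthickening hr)
  exact (isClosed_Icc.preimage (by fun_prop)).inter
    (isClosed_le contDiff_axisDistSq.continuous continuous_const)

theorem eventually_axisTube_subset {U : Set (Fin n → ℝ)} (hU : IsOpen U)
    (hsegment : segment ℝ x (x + e) ⊆ U) :
    ∀ᶠ r in nhdsWithin (0 : ℝ) (Set.Ioi 0), axisTube L x e r ⊆ U := by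
  obtain ⟨δ, hδ, hδU⟩ := (isCompact_segment x (x + e)).exists_cthickening_subset_open hU hsegment
  filter_upwards [Ioc_mem_nhdsGT hδ] with r hr
  exact ((axisTube_subset_cthickening hr.1.le).trans (Metric.cthickening_mono hr.2 _)).trans hδU

theorem base_add_smul_mem_axisTube (hL : L e = 1) {t : ℝ} (ht : t ∈ Set.Icc (0 : ℝ) 1) :
    x + t • e ∈ axisTube L x e r :=
  ⟨by simpa [hL] using ht, by rw [axisDistSq_base_add_smul hL]; positivity⟩

theorem eq_of_mem_frontier_axisTube (hξ : ξ ∈ axisTube L x e r)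
    (hfrontier : ξ ∈ frontier (axisTube L x e r)) :
    L (ξ - x) = 0 ∨ L (ξ - x) = 1 ∨ axisDistSq L x e ξ = r ^ 2 := by
  by_contra! hne
  have hopen : IsOpen {z | L (z - x) ∈ Set.Ioo 0 1 ∧ axisDistSq L x e z < r ^ 2} :=
    (isOpen_Ioo.preimage (by fun_prop)).inter
      (isOpen_lt contDiff_axisDistSq.continuous continuous_const)
  have hsubset : {z | L (z - x) ∈ Set.Ioo 0 1 ∧ axisDistSq L x e z < r ^ 2} ⊆ axisTube L x e r :=
    fun z hz => ⟨Set.Ioo_subset_Icc_self hz.1, hz.2.le⟩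
  refine hfrontier.2 (interior_maximal hsubset hopen ?_)
  exact And.intro ⟨hξ.1.1.lt_of_ne' hne.1, hξ.1.2.lt_of_ne hne.2.1⟩ (hξ.2.lt_of_ne hne.2.2)

end AxisTube

section Convexity

variable {n : ℕ} {a : ℝ} {D : Set (Fin n → ℝ)} {w : (Fin n → ℝ) → EReal}

theorem exists_forall_le_coe {X : Type*} [TopologicalSpace X] {K : Set X} (hK : IsCompact K)
    {u : X → EReal} (hu : UpperSemicontinuousOn u K) (htop : ∀ x ∈ K, u x ≠ ⊤) :
    ∃ M : ℝ, ∀ x ∈ K, u x ≤ M := by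
  obtain rfl | hne := K.eq_empty_or_nonempty
  · exact ⟨0, by simp⟩
  obtain ⟨z, hz, hmax⟩ := hu.exists_isMaxOn hne hK
  exact ⟨(u z).toReal, fun x hx => (hmax hx).trans (EReal.le_coe_toReal (htop z hz))⟩

/- The penalty `-N * axisDistSq` is constant along `e`, hence admissible in the definition of
type `F`; it vanishes on the axis and, for large `N`, beats `w` on the lateral boundary. -/
theorem IsTypeF.le_lineMap_of_axisTube_subset (ha : ((n : ℝ) - 1) * π / 2 ≤ a) (hD : IsOpen D)
    (hw : IsTypeF (Fc n a) D w) {L : (Fin n → ℝ) →L[ℝ] ℝ} {x e : Fin n → ℝ} (hL : L e = 1)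
    {r : ℝ} (hr : 0 < r) (htube : axisTube L x e r ⊆ D) {s₀ s₁ : ℝ}
    (h₀ : ∀ ξ ∈ axisTube L x e r, L (ξ - x) = 0 → w ξ ≤ s₀)
    (h₁ : ∀ ξ ∈ axisTube L x e r, L (ξ - x) = 1 → w ξ ≤ s₁) {t : ℝ} (ht : t ∈ Set.Icc (0 : ℝ) 1) :
    w (x + t • e) ≤ (AffineMap.lineMap s₀ s₁ t : ℝ) := by
  have hcompact := isCompact_axisTube (L := L) (x := x) (e := e) hr.le
  obtain ⟨M, hM⟩ := exists_forall_le_coe hcompact (hw.2.1.mono htube) fun ξ hξ => hw.1 ξ (htube hξ)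
  set N : ℝ := |M - min s₀ s₁| / r ^ 2
  have hN : 0 ≤ N := by positivity
  have hsub := isSubaffine_add_of_invariant ha hD hw
    (V := fun ξ => -N * axisDistSq L x e ξ) (contDiff_const.mul contDiff_axisDistSq).contDiffOn
    (e := e) (by rintro rfl; simp at hL) (fun ξ t => by simp only [axisDistSq_add_smul hL])
  let l : (Fin n → ℝ) →ᵃ[ℝ] ℝ :=
    (AffineMap.lineMap s₀ s₁).comp (L.toLinearMap.toAffineMap - AffineMap.const ℝ _ (L x))
  have hl (ξ) : l ξ = AffineMap.lineMap s₀ s₁ (L (ξ - x)) := by simp [l]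
  have haxis := hsub l _ hcompact htube (fun ξ hξ => ?_) _ (base_add_smul_mem_axisTube hL ht)
  · simpa [hl, axisDistSq_base_add_smul hL, hL] using haxis
  have hmem := hcompact.isClosed.frontier_subset hξ
  have hpenalty : -N * axisDistSq L x e ξ ≤ 0 :=
    mul_nonpos_of_nonpos_of_nonneg (neg_nonpos.2 hN) axisDistSq_nonneg
  suffices ∃ B : ℝ, w ξ ≤ B ∧ B + -N * axisDistSq L x e ξ ≤ l ξ by
    obtain ⟨B, hwB, hB⟩ := this
    exact (add_le_add_left hwB _).trans (by exact_mod_cast hB)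
  rcases eq_of_mem_frontier_axisTube hmem hξ with hbot | htop | hside
  · exact ⟨s₀, h₀ ξ hmem hbot, by rw [hl, hbot, AffineMap.lineMap_apply_zero]; linarith⟩
  · exact ⟨s₁, h₁ ξ hmem htop, by rw [hl, htop, AffineMap.lineMap_apply_one]; linarith⟩
  · refine ⟨M, hM ξ hmem, ?_⟩
    have hmin : min s₀ s₁ ≤ l ξ := by
      rw [hl, AffineMap.lineMap_apply_module]
      exact Convex.min_le_combo _ _ (sub_nonneg.2 hmem.1.2) hmem.1.1 (by ring)
    have hNr : N * r ^ 2 = |M - min s₀ s₁| := div_mul_cancel₀ _ (by positivity)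
    rw [hside, neg_mul, hNr]
    linarith [le_abs_self (M - min s₀ s₁)]

theorem IsTypeF.le_lineMap (ha : ((n : ℝ) - 1) * π / 2 ≤ a) (hD : IsOpen D)
    (hw : IsTypeF (Fc n a) D w) {x y : Fin n → ℝ} (hxy : segment ℝ x y ⊆ D) {s₀ s₁ : ℝ}
    (h₀ : w x < s₀) (h₁ : w y < s₁) {t : ℝ} (ht : t ∈ Set.Icc (0 : ℝ) 1) :
    w (AffineMap.lineMap x y t) ≤ (AffineMap.lineMap s₀ s₁ t : ℝ) := by
  obtain rfl | hne := eq_or_ne x y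
  · rw [AffineMap.lineMap_same_apply, AffineMap.lineMap_apply_module]
    refine (lt_min h₀ h₁).le.trans ?_
    rw [← EReal.coe_strictMono.monotone.map_min, EReal.coe_le_coe_iff]
    exact Convex.min_le_combo s₀ s₁ (sub_nonneg.2 ht.2) ht.1 (by ring)
  obtain ⟨L, hL⟩ := SeparatingDual.exists_eq_one (R := ℝ) (sub_ne_zero.2 hne.symm)
  have hnear {z : Fin n → ℝ} {s : ℝ} (hz : z ∈ D) (hs : w z < s) :
      ∀ᶠ r in nhdsWithin (0 : ℝ) (Set.Ioi 0), ∀ ξ, dist ξ z ≤ r → w ξ < s := by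
    have hev := hw.2.1 z hz s hs
    rw [hD.nhdsWithin_eq hz] at hev
    obtain ⟨ρ, hρ, hball⟩ := Metric.eventually_nhds_iff_ball.1 hev
    filter_upwards [nhdsWithin_le_nhds (Iio_mem_nhds hρ)] with r hr ξ hξ
    exact hball ξ (hξ.trans_lt hr)
  have hthick : ∀ᶠ r in nhdsWithin (0 : ℝ) (Set.Ioi 0), axisTube L x (y - x) r ⊆ D :=
    eventually_axisTube_subset hD (by rwa [add_sub_cancel])
  obtain ⟨r, hr, htube, hx, hy⟩ := (eventually_mem_nhdsWithin.and <| hthick.and <|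
    (hnear (hxy (left_mem_segment ℝ x y)) h₀).and <|
      hnear (hxy (right_mem_segment ℝ x y)) h₁).exists
  rw [AffineMap.lineMap_apply, vsub_eq_sub, vadd_eq_add, add_comm]
  refine hw.le_lineMap_of_axisTube_subset ha hD hL hr htube (fun ξ hξ hξ₀ => ?_)
    (fun ξ hξ hξ₁ => ?_) ht
  · have hdist := dist_le_of_axisDistSq_le (le_of_lt hr) hξ.2
    rw [hξ₀, zero_smul, add_zero] at hdist
    exact (hx ξ hdist).le
  · have hdist := dist_le_of_axisDistSq_le (le_of_lt hr) hξ.2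
    rw [hξ₁, one_smul, add_sub_cancel] at hdist
    exact (hy ξ hdist).le

theorem IsTypeF.convex_epigraph (ha : ((n : ℝ) - 1) * π / 2 ≤ a) (hD : IsOpen D)
    (hDconv : Convex ℝ D) (hw : IsTypeF (Fc n a) D w) :
    Convex ℝ {p : (Fin n → ℝ) × ℝ | p.1 ∈ D ∧ w p.1 ≤ p.2} := by
  rintro ⟨x, s⟩ ⟨hx, hxs⟩ ⟨y, s'⟩ ⟨hy, hys⟩ α β hα hβ hαβ
  refine ⟨hDconv hx hy hα hβ hαβ, EReal.le_of_forall_lt_iff_le.1 fun σ hσ => ?_⟩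
  set ε := σ - (α * s + β * s') with hε
  have hε0 : 0 < ε := sub_pos.2 (by exact_mod_cast hσ)
  have hlt {z : Fin n → ℝ} {τ : ℝ} (h : w z ≤ τ) : w z < (τ + ε : ℝ) :=
    h.trans_lt (by exact_mod_cast lt_add_of_pos_right τ hε0)
  have hle := hw.le_lineMap ha hD (hDconv.segment_subset hx hy) (hlt hxs) (hlt hys)
    (t := β) ⟨hβ, by linarith⟩
  rw [AffineMap.lineMap_apply_module, AffineMap.lineMap_apply_module, ← eq_sub_of_add_eq hαβ] at hle
  refine hle.trans_eq (congrArg _ ?_)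
  simp only [hε, smul_eq_mul]
  linear_combination (σ - (α * s + β * s')) * hαβ

end Convexity

section Comparison

theorem IsSubaffine.le_of_limsup_frontier_le {n : ℕ} {D : Set (Fin n → ℝ)} (hD : IsOpen D)
    (hDbdd : Bornology.IsBounded D) {w : (Fin n → ℝ) → EReal} (hw : IsSubaffine D w)
    {b : (Fin n → ℝ) →ᵃ[ℝ] ℝ} (hb : ∀ y ∈ frontier D, limsup w (nhdsWithin y D) ≤ (b y : EReal))
    {x : Fin n → ℝ} (hx : x ∈ D) : w x ≤ b x := by
  refine EReal.le_of_forall_lt_iff_le.1 fun s hs => ?_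
  set ε := s - b x
  have hε0 : 0 < ε := sub_pos.2 (by exact_mod_cast hs)
  let b' : (Fin n → ℝ) →ᵃ[ℝ] ℝ := b + AffineMap.const ℝ _ ε
  have hb' : b' x = s := add_sub_cancel (b x) s
  set S := {z ∈ D | (b' z : EReal) ≤ w z}
  have hSD : closure S ⊆ D := by
    intro z hz
    by_contra hzD
    have hlt : limsup w (nhdsWithin z D) < ((b z + ε / 2 : ℝ) : EReal) := by
      refine (hb z (hD.frontier_eq ▸ ⟨closure_mono (Set.sep_subset _ _) hz, hzD⟩)).trans_lt ?_
      exact_mod_cast lt_add_of_pos_right (b z) (half_pos hε0)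
    have hcont : ContinuousAt b' z := b'.continuous_of_finiteDimensional.continuousAt
    have hnear := eventually_nhdsWithin_iff.1 (eventually_lt_of_limsup_lt hlt)
    obtain ⟨ξ, ⟨hξD, hξ⟩, hwξ, hbξ⟩ := ((mem_closure_iff_frequently.1 hz).and_eventually
      (hnear.and (hcont.eventually_const_lt (add_lt_add_right (half_lt_self hε0) (b z))))).exists
    exact ((hwξ hξD).trans (by exact_mod_cast hbξ)).not_ge hξ
  have hScompact : IsCompact (closure S) :=
    (hDbdd.subset (Set.sep_subset _ _)).isCompact_closure
  obtain ⟨K, hK, hSK, hKD⟩ := exists_compact_between hScompact hD hSD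
  have hnotS {z : Fin n → ℝ} (hzD : z ∈ D) (hz : z ∉ S) : w z ≤ b' z :=
    (not_le.1 fun hle => hz ⟨hzD, hle⟩).le
  rw [← hb']
  by_cases hxS : x ∈ S
  · refine hw _ K hK hKD (fun z hz => ?_) x (interior_subset (hSK (subset_closure hxS)))
    exact hnotS (hKD (hK.isClosed.frontier_subset hz)) fun hzS => hz.2 (hSK (subset_closure hzS))
  · exact hnotS hx hxS

end Comparison

section Barrier

variable {E : Type*} [TopologicalSpace E] [AddCommGroup E] [Module ℝ E]

theorem frontier_subset_exposedPoints_closure [IsTopologicalAddGroup E] [ContinuousSMul ℝ E]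
    {D : Set E} (hD : IsOpen D) (hDconv : Convex ℝ D)
    (hDstrict : ∀ x ∈ frontier D, ∀ y ∈ frontier D, x ≠ y → ¬ segment ℝ x y ⊆ frontier D) :
    frontier D ⊆ (closure D).exposedPoints ℝ := by
  intro y hy
  obtain ⟨φ, hφ⟩ := geometric_hahn_banach_open_point hDconv hD (hD.frontier_eq ▸ hy).2
  have hle : closure D ⊆ {z | φ z ≤ φ y} :=
    closure_minimal (fun z hz => (hφ z hz).le) (isClosed_le φ.continuous continuous_const)
  refine ⟨frontier_subset_closure hy, φ, fun z hz => ⟨hle hz, fun hge => ?_⟩⟩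
  have hfrontier {s : E} (hs : s ∈ closure D) (heq : φ s = φ y) : s ∈ frontier D :=
    hD.frontier_eq ▸ ⟨hs, fun hsD => (hφ s hsD).ne heq⟩
  have hφz : φ z = φ y := (hle hz).antisymm hge
  by_contra hne
  refine hDstrict z (hfrontier hz hφz) y hy hne fun s hs => ?_
  refine hfrontier (hDconv.closure.segment_subset hz (frontier_subset_closure hy) hs) ?_
  obtain ⟨α, β, -, -, hαβ, rfl⟩ := hs
  rw [map_add, map_smul, map_smul, hφz, ← add_smul, hαβ, one_smul]

theorem exists_affine_ge_of_mem_exposedPoints {K : Set E} (hK : IsCompact K) {f : E → ℝ}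
    (hf : UpperSemicontinuousOn f K) {y : E} (hy : y ∈ K.exposedPoints ℝ) {ε : ℝ} (hε : 0 < ε) :
    ∃ b : E →ᴬ[ℝ] ℝ, b y = f y + ε ∧ ∀ z ∈ K, f z ≤ b z := by
  obtain ⟨hyK, φ, hφ⟩ := hy
  obtain ⟨M, hM⟩ := hf.bddAbove_of_isCompact hK
  obtain ⟨U, hU, hUopen, hyU⟩ := mem_nhds_iff.1
    (eventually_nhdsWithin_iff.1 (hf y hyK (f y + ε) (lt_add_of_pos_right _ hε)))
  have hgap {z : E} (hz : z ∈ K \ U) : 0 < φ y - φ z :=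
    sub_pos.2 (not_le.1 fun hge => hz.2 ((hφ z hz.1).2 hge ▸ hyU))
  obtain ⟨C, hC⟩ := (hK.diff hUopen).bddAbove_image
    (f := fun z => (M - f y - ε) / (φ y - φ z))
    (continuousOn_const.div (by fun_prop) fun z hz => (hgap hz).ne')
  let b : E →ᴬ[ℝ] ℝ := ContinuousAffineMap.const ℝ E (f y + ε) +
    max C 0 • (ContinuousAffineMap.const ℝ E (φ y) - φ.toContinuousAffineMap)
  have hb (z : E) : b z = f y + ε + max C 0 * (φ y - φ z) := rfl
  refine ⟨b, by simp [hb], fun z hz => ?_⟩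
  by_cases hzU : z ∈ U
  · have hφz : 0 ≤ φ y - φ z := sub_nonneg.2 (hφ z hz).1
    rw [hb]
    linarith [hU hzU hz, mul_nonneg (le_max_right C 0) hφz]
  · have hφz := hgap ⟨hz, hzU⟩
    have hCz := (div_le_iff₀ hφz).1 (hC ⟨z, ⟨hz, hzU⟩, rfl⟩)
    rw [hb]
    linarith [hM ⟨z, hz, rfl⟩, mul_le_mul_of_nonneg_right (le_max_left C 0) hφz.le]

end Barrier

section Envelope

variable {n : ℕ} {F : Set (Matrix (Fin n) (Fin n) ℝ)} {a : ℝ} {D : Set (Fin n → ℝ)}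
  {v f : (Fin n → ℝ) → ℝ}

/-- The functions of type `F` on `D` that lie below the obstacle `v` on `D` and below the boundary
datum `f` on `∂D`, the latter in the sense of upper limits from inside `D`. -/
def envelopeCandidates (F : Set (Matrix (Fin n) (Fin n) ℝ)) (D : Set (Fin n → ℝ))
    (v f : (Fin n → ℝ) → ℝ) : Set ((Fin n → ℝ) → EReal) :=
  {w | IsTypeF F D w ∧ (∀ x ∈ D, w x ≤ (v x : EReal)) ∧
    ∀ y ∈ frontier D, limsup w (nhdsWithin y D) ≤ (f y : EReal)}

/-- The envelope `P(v; f)`: the pointwise supremum of the candidates. Only its values on `D` are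
meaningful, as the candidates are unconstrained elsewhere. -/
noncomputable def envelope (F : Set (Matrix (Fin n) (Fin n) ℝ)) (D : Set (Fin n → ℝ))
    (v f : (Fin n → ℝ) → ℝ) (x : Fin n → ℝ) : EReal :=
  ⨆ w ∈ envelopeCandidates F D v f, w x

theorem isTypeF_iSup {C : Set ((Fin n → ℝ) → EReal)} (hC : ∀ w ∈ C, IsTypeF F D w)
    (htop : ∀ x ∈ D, ⨆ w ∈ C, w x ≠ ⊤) (husc : UpperSemicontinuousOn (fun x => ⨆ w ∈ C, w x) D) :
    IsTypeF F D (fun x => ⨆ w ∈ C, w x) := by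
  refine ⟨htop, husc, fun V hV hdual l K hK hKD hfrontier x hx => ?_⟩
  have hle_sub {s : EReal} {z : Fin n → ℝ} : s ≤ l z - V z ↔ s + V z ≤ l z :=
    EReal.le_sub_iff_add_le (.inl (EReal.coe_ne_bot _)) (.inl (EReal.coe_ne_top _))
  refine hle_sub.1 (iSup₂_le fun w hw => hle_sub.2 ?_)
  refine (hC w hw).2.2 V hV hdual l K hK hKD (fun z hz => ?_) x hx
  exact (add_le_add_left (le_iSup₂ (f := fun w (_ : w ∈ C) => w z) w hw) _).trans (hfrontier z hz)

theorem le_envelope {w : (Fin n → ℝ) → EReal} (hw : w ∈ envelopeCandidates F D v f)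
    (x : Fin n → ℝ) : w x ≤ envelope F D v f x :=
  le_iSup₂ (f := fun w (_ : w ∈ envelopeCandidates F D v f) => w x) w hw

theorem envelope_le {x : Fin n → ℝ} (hx : x ∈ D) : envelope F D v f x ≤ v x :=
  iSup₂_le fun _ hw => hw.2.1 x hx

theorem coe_toReal_envelope {w : (Fin n → ℝ) → EReal} (hw : w ∈ envelopeCandidates F D v f)
    {x : Fin n → ℝ} (hx : x ∈ D) (hbot : w x ≠ ⊥) :
    ((envelope F D v f x).toReal : EReal) = envelope F D v f x :=
  EReal.coe_toReal ((envelope_le hx).trans_lt (EReal.coe_lt_top _)).ne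
    ((bot_lt_iff_ne_bot.2 hbot).trans_le (le_envelope hw x)).ne'

theorem convex_epigraph_envelope (ha : ((n : ℝ) - 1) * π / 2 ≤ a) (hD : IsOpen D)
    (hDconv : Convex ℝ D) :
    Convex ℝ {p : (Fin n → ℝ) × ℝ | p.1 ∈ D ∧ envelope (Fc n a) D v f p.1 ≤ p.2} := by
  have hinter : {p : (Fin n → ℝ) × ℝ | p.1 ∈ D ∧ envelope (Fc n a) D v f p.1 ≤ p.2} =
      Prod.fst ⁻¹' D ∩ ⋂ w ∈ envelopeCandidates (Fc n a) D v f,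
        {p : (Fin n → ℝ) × ℝ | p.1 ∈ D ∧ w p.1 ≤ p.2} := by
    ext p
    simp +contextual [envelope]
  rw [hinter]
  exact (hDconv.linear_preimage (LinearMap.fst ℝ _ ℝ)).inter
    (convex_iInter₂ fun w hw => hw.1.convex_epigraph ha hD hDconv)

theorem convexOn_toReal_envelope (ha : ((n : ℝ) - 1) * π / 2 ≤ a) (hD : IsOpen D)
    (hDconv : Convex ℝ D) {w : (Fin n → ℝ) → EReal} (hw : w ∈ envelopeCandidates (Fc n a) D v f)
    (hbot : ∀ x ∈ D, w x ≠ ⊥) :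
    ConvexOn ℝ D (fun x => (envelope (Fc n a) D v f x).toReal) := by
  rw [convexOn_iff_convex_epigraph]
  convert convex_epigraph_envelope (v := v) (f := f) ha hD hDconv using 1
  ext p
  refine and_congr_right fun hp => ?_
  rw [← EReal.coe_le_coe_iff, coe_toReal_envelope hw hp (hbot _ hp)]

theorem continuousOn_envelope (ha : ((n : ℝ) - 1) * π / 2 ≤ a) (hD : IsOpen D)
    (hDconv : Convex ℝ D) {w : (Fin n → ℝ) → EReal} (hw : w ∈ envelopeCandidates (Fc n a) D v f)
    (hbot : ∀ x ∈ D, w x ≠ ⊥) : ContinuousOn (envelope (Fc n a) D v f) D :=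
  (continuous_coe_real_ereal.comp_continuousOn
    ((convexOn_toReal_envelope ha hD hDconv hw hbot).continuousOn hD)).congr
      fun x hx => (coe_toReal_envelope hw hx (hbot x hx)).symm

theorem limsup_envelope_le (ha : ((n : ℝ) - 1) * π / 2 ≤ a) (hD : IsOpen D)
    (hDbdd : Bornology.IsBounded D) (hDconv : Convex ℝ D)
    (hDstrict : ∀ x ∈ frontier D, ∀ y ∈ frontier D, x ≠ y → ¬ segment ℝ x y ⊆ frontier D)
    (hf : UpperSemicontinuousOn f (frontier D)) {y : Fin n → ℝ} (hy : y ∈ frontier D) :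
    limsup (envelope (Fc n a) D v f) (nhdsWithin y D) ≤ f y := by
  have : NeZero n := ⟨by rintro rfl; simp at hy⟩
  refine EReal.le_of_forall_lt_iff_le.1 fun s hs => ?_
  have hfs : f y < s := EReal.coe_lt_coe_iff.1 hs
  obtain ⟨-, φ, hφ⟩ := frontier_subset_exposedPoints_closure hD hDconv hDstrict hy
  obtain ⟨b, hby, hb⟩ := exists_affine_ge_of_mem_exposedPoints
    (hDbdd.isCompact_closure.of_isClosed_subset isClosed_frontier frontier_subset_closure) hf
    ⟨hy, φ, fun z hz => hφ z (frontier_subset_closure hz)⟩ (half_pos (sub_pos.2 hfs))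
  have hle : ∀ x ∈ D, envelope (Fc n a) D v f x ≤ b x := fun x hx =>
    iSup₂_le fun w hw => (hw.1.isSubaffine ha hD).le_of_limsup_frontier_le hD hDbdd
      (b := b.toAffineMap) (fun z hz => (hw.2.2 z hz).trans (EReal.coe_le_coe_iff.2 (hb z hz))) hx
  have hnear : ∀ᶠ z in nhdsWithin y D, b z < s :=
    nhdsWithin_le_nhds (b.continuous.continuousAt.eventually_lt_const (by linarith))
  refine limsup_le_of_le (h := ?_)
  filter_upwards [hnear, self_mem_nhdsWithin] with z hz hzD
  exact (hle z hzD).trans (EReal.coe_le_coe_iff.2 hz.le)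

theorem exists_mem_envelopeCandidates_ne_bot (ha : a < n * π / 2) (hD : IsOpen D)
    (hDbdd : Bornology.IsBounded D) (hv : BddBelow (v '' D)) (hf : BddBelow (f '' frontier D)) :
    ∃ w ∈ envelopeCandidates (Fc n a) D v f, ∀ x ∈ D, w x ≠ ⊥ := by
  obtain ⟨c, hc⟩ := exists_le_mul_arctan ha
  obtain ⟨m₁, hm₁⟩ := hv
  obtain ⟨m₂, hm₂⟩ := hf
  have hcont : Continuous fun x : Fin n → ℝ => (c + 1) / 2 * (x ⬝ᵥ x) := by fun_prop
  obtain ⟨M, hM⟩ := hDbdd.isCompact_closure.bddAbove_image hcont.continuousOn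
  set q : (Fin n → ℝ) → ℝ := fun x => (c + 1) / 2 * (x ⬝ᵥ x) - (M - min m₁ m₂)
  have hqle {x : Fin n → ℝ} (hx : x ∈ closure D) : q x ≤ min m₁ m₂ :=
    (sub_le_sub_right (hM ⟨x, hx, rfl⟩) _).trans_eq (sub_sub_cancel _ _)
  refine ⟨fun x => q x, ⟨isTypeF_quadratic hc (lt_add_one c) hD _, fun x hx => ?_, fun y hy => ?_⟩,
    fun x _ => EReal.coe_ne_bot _⟩
  · exact EReal.coe_le_coe_iff.2
      ((hqle (subset_closure hx)).trans ((min_le_left _ _).trans (hm₁ ⟨x, hx, rfl⟩)))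
  · have hyD := frontier_subset_closure hy
    have := mem_closure_iff_nhdsWithin_neBot.1 hyD
    have hlim : Tendsto (fun x => (q x : EReal)) (nhdsWithin y D) (nhds (q y)) :=
      ((continuous_coe_real_ereal.comp (hcont.sub continuous_const)).tendsto y).mono_left
        nhdsWithin_le_nhds
    rw [hlim.limsup_eq, EReal.coe_le_coe_iff]
    exact (hqle hyD).trans ((min_le_right _ _).trans (hm₂ ⟨y, hy, rfl⟩))

theorem envelope_properties_general (ha : ((n : ℝ) - 1) * π / 2 ≤ a) (hDopen : IsOpen D)
    (hDbdd : Bornology.IsBounded D) (hDconv : Convex ℝ D)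
    (hDstrict : ∀ x ∈ frontier D, ∀ y ∈ frontier D, x ≠ y → ¬ segment ℝ x y ⊆ frontier D)
    (hf : UpperSemicontinuousOn f (frontier D))
    (hfinite : ∃ w ∈ envelopeCandidates (Fc n a) D v f, ∀ x ∈ D, w x ≠ ⊥) :
    (∀ x ∈ D, limsup (envelope (Fc n a) D v f) (nhds x) = envelope (Fc n a) D v f x) ∧
    IsTypeF (Fc n a) D (envelope (Fc n a) D v f) ∧
    (∃ p : (Fin n → ℝ) → ℝ, (∀ x ∈ D, envelope (Fc n a) D v f x = (p x : EReal)) ∧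
      ContinuousOn p D ∧ ConvexOn ℝ D p) ∧
    (∀ x ∈ D, envelope (Fc n a) D v f x ≤ (v x : EReal)) ∧
    (∀ y ∈ frontier D, limsup (envelope (Fc n a) D v f) (nhdsWithin y D) ≤ (f y : EReal)) := by
  obtain ⟨w, hw, hbot⟩ := hfinite
  have hcont := continuousOn_envelope ha hDopen hDconv hw hbot
  have hconv := convexOn_toReal_envelope ha hDopen hDconv hw hbot
  refine ⟨fun x hx => (hcont.continuousAt (hDopen.mem_nhds hx)).tendsto.limsup_eq, ?_,
    ⟨_, fun x hx => (coe_toReal_envelope hw hx (hbot x hx)).symm, hconv.continuousOn hDopen, hconv⟩,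
    fun x hx => envelope_le hx,
    fun y hy => limsup_envelope_le ha hDopen hDbdd hDconv hDstrict hf hy⟩
  exact isTypeF_iSup (fun w hw => hw.1)
    (fun x hx => ((envelope_le hx).trans_lt (EReal.coe_lt_top _)).ne) hcont.upperSemicontinuousOn

end Envelope

/-- **Properties of the obstacle envelope.**  Let `D ⊂ ℝⁿ` be a bounded strictly convex
domain, `a ∈ [(n−1)π/2, nπ/2)`, `v ∈ C⁰(D̄)` and `f ∈ C⁰(∂D)`.  Define
`P(v;f) := sup{w ∈ F_a(D) : w ≤ v on D, limsup_{ξ→y} w(ξ) ≤ f(y) for all y ∈ ∂D}` and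
assume the candidate family is nonempty.  Then `P(v;f)` equals its upper semicontinuous
regularization, `P(v;f) ∈ F_a(D)`, `P(v;f)` is (real-valued,) convex and continuous on
`D`, and `P(v;f)` is itself a candidate in its own defining family. -/
theorem envelope_properties (n : ℕ) (a : ℝ)
    (ha : ((n : ℝ) - 1) * π / 2 ≤ a) (ha' : a < (n : ℝ) * π / 2)
    (D : Set (Fin n → ℝ)) (hDopen : IsOpen D) (hDconn : IsConnected D)
    (hDbdd : Bornology.IsBounded D) (hDconv : Convex ℝ D)
    (hDstrict : ∀ x ∈ frontier D, ∀ y ∈ frontier D, x ≠ y →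
      ¬ segment ℝ x y ⊆ frontier D)
    (v : (Fin n → ℝ) → ℝ) (hv : ContinuousOn v (closure D))
    (f : (Fin n → ℝ) → ℝ) (hf : ContinuousOn f (frontier D))
    (Cand : Set ((Fin n → ℝ) → EReal))
    (hCand : Cand = {w | IsTypeF (Fc n a) D w ∧ (∀ x ∈ D, w x ≤ (v x : EReal)) ∧
      ∀ y ∈ frontier D, Filter.limsup w (nhdsWithin y D) ≤ (f y : EReal)})
    (hne : Cand.Nonempty)
    (P : (Fin n → ℝ) → EReal) (hP : P = fun x => ⨆ w ∈ Cand, w x) :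
    (∀ x ∈ D, Filter.limsup P (nhds x) = P x) ∧
    IsTypeF (Fc n a) D P ∧
    (∃ p : (Fin n → ℝ) → ℝ, (∀ x ∈ D, P x = (p x : EReal)) ∧
      ContinuousOn p D ∧ ConvexOn ℝ D p) ∧
    (∀ x ∈ D, P x ≤ (v x : EReal)) ∧
    (∀ y ∈ frontier D, Filter.limsup P (nhdsWithin y D) ≤ (f y : EReal)) := by
  subst hCand hP
  exact envelope_properties_general ha hDopen hDbdd hDconv hDstrict hf.upperSemicontinuousOn
    (exists_mem_envelopeCandidates_ne_bot ha' hDopen hDbdd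
      ((hDbdd.isCompact_closure.bddBelow_image hv).mono (Set.image_mono subset_closure))
      ((hDbdd.isCompact_closure.of_isClosed_subset isClosed_frontier
        frontier_subset_closure).bddBelow_image hf))
end
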